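/- Let G and Ω be domains in ℂ such that G is either simply connected or has at least two holes, and let Φ = (φₙ) be an eventually injective sequence of holomorphic maps from G to Ω. Then there exists a (Φ,G,Ω)-universal function if and only if for every G-convex compact set K ⊆ G, every compact set L ⊆ Ω, and every N ∈ ℕ, there exists n ≥ N such that φₙ(K) ∩ L = ∅ and φₙ(K) is Ω-convex. -/

import Mathlib

open Set Metric Bornology Filter

/-- A *hole* of `E` is a nonempty bounded connected component of `ℂ \ E`. -/
def IsHole (E C : Set ℂ) : Prop :=
  (∃ z ∈ Eᶜ, C = connectedComponentIn Eᶜ z) ∧ Bornology.IsBounded C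

/-- A compact set `K` contained in an open set `Ω` is `Ω`-*convex* if every hole of `K`
contains a point of `ℂ \ Ω`. -/
def OmegaConvex (Ω K : Set ℂ) : Prop :=
  ∀ C : Set ℂ, IsHole K C → (C ∩ Ωᶜ).Nonempty

/-- The *polynomial hull* of `K`: the union of `K` and all of its holes. -/
def polyHull (K : Set ℂ) : Set ℂ :=
  K ∪ {z | z ∈ Kᶜ ∧ Bornology.IsBounded (connectedComponentIn Kᶜ z)}

/-- A sequence of maps is *eventually injective* on `G`: for every compact `K ⊆ G`, the maps
are eventually injective on a neighbourhood of `K` in `G`. -/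
def EventuallyInjective (G : Set ℂ) (φ : ℕ → ℂ → ℂ) : Prop :=
  ∀ K : Set ℂ, K ⊆ G → IsCompact K →
    ∃ N : ℕ, ∀ n ≥ N, ∃ U : Set ℂ, IsOpen U ∧ K ⊆ U ∧ U ⊆ G ∧ Set.InjOn (φ n) U

/-- `f` is `(Φ, G, Ω)`-*universal*: the family `{f ∘ φ n : n ∈ ℕ}` is dense in `H(G)` for the
topology of locally uniform convergence, i.e. every `g` holomorphic on `G` can be approximated
uniformly on every compact subset of `G` by functions `f ∘ φ n`. -/
def UniversalFor (G : Set ℂ) (φ : ℕ → ℂ → ℂ) (f : ℂ → ℂ) : Prop :=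
  ∀ g : ℂ → ℂ, DifferentiableOn ℂ g G →
    ∀ K : Set ℂ, K ⊆ G → IsCompact K → ∀ ε : ℝ, 0 < ε →
      ∃ n : ℕ, ∀ z ∈ K, ‖f (φ n z) - g z‖ < ε

/-- `E` has no hole (for a domain: simple connectivity). -/
def HasNoHole (E : Set ℂ) : Prop := ¬ ∃ C : Set ℂ, IsHole E C

/-- A *Jordan curve*: the image of the unit circle under an injective continuous map. -/
def IsJordanCurve (C : Set ℂ) : Prop :=
  ∃ γ : ℂ → ℂ, ContinuousOn γ (Metric.sphere 0 1) ∧ Set.InjOn γ (Metric.sphere 0 1) ∧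
    C = γ '' Metric.sphere 0 1

/-- A *Jordan arc*: the image of `[0,1]` under an injective continuous map. -/
def IsJordanArc (C : Set ℂ) : Prop :=
  ∃ γ : ℝ → ℂ, ContinuousOn γ (Set.Icc 0 1) ∧ Set.InjOn γ (Set.Icc 0 1) ∧
    C = γ '' Set.Icc 0 1

/-- A compact set is *regular* if its boundary is a union of Jordan curves. -/
def RegularCompact (K : Set ℂ) : Prop :=
  ∃ 𝒞 : Set (Set ℂ), (∀ C ∈ 𝒞, IsJordanCurve C) ∧ frontier K = ⋃₀ 𝒞

/-- `K` is `Ω`-*connected*: it has no hole if `Ω` is simply connected, and has at least one hole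
if `Ω` is not simply connected. -/
def OmegaConnectedSet (Ω K : Set ℂ) : Prop :=
  (HasNoHole Ω → HasNoHole K) ∧ (¬ HasNoHole Ω → ∃ C : Set ℂ, IsHole K C)

/-- Membership in the family `M(Ω)` of nonempty compact subsets of `Ω` that are regular,
connected, `Ω`-connected and `Ω`-convex. -/
def MemM (Ω K : Set ℂ) : Prop :=
  K.Nonempty ∧ IsCompact K ∧ K ⊆ Ω ∧ RegularCompact K ∧ IsConnected K ∧
    OmegaConnectedSet Ω K ∧ OmegaConvex Ω K

/-- `f` is `(Φ, M)`-*universal*: for every `K ∈ M`, the restrictions of the `f ∘ φ n` to `K`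
are dense in `C(K)`. -/
def MUniversal (M : Set (Set ℂ)) (φ : ℕ → ℂ → ℂ) (f : ℂ → ℂ) : Prop :=
  ∀ K ∈ M, ∀ h : ℂ → ℂ, ContinuousOn h K → ∀ ε : ℝ, 0 < ε →
    ∃ n : ℕ, ∀ z ∈ K, ‖f (φ n z) - h z‖ < ε

/-!
Necessity is the maximum principle for a universal `f` on the holes of `φ n '' K`, where `f ∘ φ n`
approximates a function separating `K` from its complementary components.

Sufficiency: by Baire's theorem and Runge's theorem it is enough to find arbitrarily large connected
compact sets `L ⊆ Ω` and `K ⊆ G` and an index `n` such that `φ n '' K` is disjoint from `L` and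
`L ∪ φ n '' K` is `Ω`-convex. As `L` and `φ n '' K` are themselves `Ω`-convex, the only possible
obstruction is a hole lying between the two sets and contained in `Ω`. If it were present for all
`n`, then `φ m '' K` and `φ n '' K` would lie in the same component of `Lᶜ` for some `m < n`, with
`φ n '' K` outside the region between `L` and `φ m '' K`. A third component of the complement of
`φ m '' K` is then contained in the region between `L` and `φ n '' K`, hence in `Ω`, which
contradicts the `Ω`-convexity of `φ m '' K`. Injective holomorphic maps preserve the number of
complementary components of `K`, and the assumption on the holes of `G` makes it possible to choose
`K` so that this number is not two; it cannot be one in the presence of the obstruction.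
-/

section Components

variable {X : Type*} [TopologicalSpace X]

theorem mem_connectedComponentIn_comm {F : Set X} {x y : X} :
    x ∈ connectedComponentIn F y ↔ y ∈ connectedComponentIn F x := by
  have mem_of_mem {x y : X} (h : x ∈ connectedComponentIn F y) : y ∈ connectedComponentIn F x := by
    rw [← connectedComponentIn_eq h]
    exact mem_connectedComponentIn (connectedComponentIn_nonempty_iff.1 ⟨x, h⟩)
  exact ⟨mem_of_mem, mem_of_mem⟩

theorem connectedComponentIn_inter_subset {F F' : Set X} {x : X} :
    connectedComponentIn (F ∩ F') x ⊆ connectedComponentIn F x ∩ connectedComponentIn F' x :=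
  subset_inter (connectedComponentIn_mono x inter_subset_left)
    (connectedComponentIn_mono x inter_subset_right)

variable [LocallyConnectedSpace X]

theorem closure_connectedComponentIn_inter_subset {U : Set X} (hU : IsOpen U) (x : X) :
    closure (connectedComponentIn U x) ∩ U ⊆ connectedComponentIn U x := by
  rintro y ⟨hy, hyU⟩
  obtain ⟨w, hwy, hwx⟩ := mem_closure_iff_nhds.1 hy _ (connectedComponentIn_mem_nhds
    (hU.mem_nhds hyU))
  rw [connectedComponentIn_eq hwx]
  exact mem_connectedComponentIn_comm.1 hwy

theorem closure_connectedComponentIn_compl_subset {E : Set X} (hE : IsClosed E) (x : X) :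
    closure (connectedComponentIn Eᶜ x) ⊆ connectedComponentIn Eᶜ x ∪ E := fun y hy ↦
  (em (y ∈ E)).elim Or.inr fun hyE ↦
    Or.inl (closure_connectedComponentIn_inter_subset hE.isOpen_compl x ⟨hy, hyE⟩)

theorem frontier_connectedComponentIn_compl_subset {E : Set X} (hE : IsClosed E) (x : X) :
    frontier (connectedComponentIn Eᶜ x) ⊆ E := by
  rw [hE.isOpen_compl.connectedComponentIn.frontier_eq]
  exact fun y hy ↦ (closure_connectedComponentIn_compl_subset hE x hy.1).resolve_left hy.2

theorem closure_connectedComponentIn_compl_inter_nonempty [PreconnectedSpace X] {E : Set X}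
    (hE : IsClosed E) (hne : E.Nonempty) {x : X} (hx : x ∉ E) :
    (closure (connectedComponentIn Eᶜ x) ∩ E).Nonempty := by
  by_contra hempty
  obtain ⟨y, hy⟩ := hne
  have hsub : closure (connectedComponentIn Eᶜ x) ⊆ connectedComponentIn Eᶜ x := fun w hw ↦
    (closure_connectedComponentIn_compl_subset hE x hw).resolve_right fun hwE ↦
      hempty ⟨w, hw, hwE⟩
  have huniv : connectedComponentIn Eᶜ x = univ :=
    IsClopen.eq_univ ⟨isClosed_of_closure_subset hsub, hE.isOpen_compl.connectedComponentIn⟩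
      ⟨x, mem_connectedComponentIn hx⟩
  exact connectedComponentIn_subset Eᶜ x (huniv ▸ mem_univ y) hy

theorem connectedComponentIn_compl_inter_nonempty [PreconnectedSpace X] {E U : Set X}
    (hE : IsClosed E) (hne : E.Nonempty) (hU : IsOpen U) (hEU : E ⊆ U) {x : X} (hx : x ∉ E) :
    (connectedComponentIn Eᶜ x ∩ U).Nonempty := by
  obtain ⟨y, hy, hyE⟩ := closure_connectedComponentIn_compl_inter_nonempty hE hne hx
  rw [inter_comm]
  exact mem_closure_iff.1 hy U hU (hEU hyE)

theorem isPreconnected_connectedComponentIn_compl_union [PreconnectedSpace X] {E : Set X}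
    (hclosed : IsClosed E) (hE : IsConnected E) {x : X} (hx : x ∉ E) :
    IsPreconnected (connectedComponentIn Eᶜ x ∪ E) := by
  have hunion : connectedComponentIn Eᶜ x ∪ E = closure (connectedComponentIn Eᶜ x) ∪ E :=
    (union_subset_union_left E subset_closure).antisymm
      (union_subset (closure_connectedComponentIn_compl_subset hclosed x) subset_union_right)
  rw [hunion]
  exact isPreconnected_connectedComponentIn.closure.union'
    (closure_connectedComponentIn_compl_inter_nonempty hclosed hE.nonempty hx) hE.isPreconnected

end Components

section Janiszewski

variable {X : Type*} [TopologicalSpace X]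

theorem exists_continuousMap_exp_eq [SimplyConnectedSpace X] [LocallyPathConnectedSpace X]
    {u : X → ℂ} (hu : Continuous u) (h0 : ∀ x, u x ≠ 0) :
    ∃ θ : C(X, ℂ), ∀ x, Complex.exp (θ x) = u x := by
  obtain ⟨x₀⟩ : Nonempty X := inferInstance
  obtain ⟨θ, ⟨-, hθ⟩, -⟩ := Complex.isCoveringMapOn_exp.existsUnique_continuousMap_lifts
    ⟨u, hu⟩ (Complex.exp_log (h0 x₀)) h0
  exact ⟨θ, congrFun hθ⟩

theorem sub_eq_sub_of_exp_eq {S : Set X} (hS : IsPreconnected S) {f g : X → ℂ}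
    (hf : ContinuousOn f S) (hg : ContinuousOn g S)
    (hexp : ∀ x ∈ S, Complex.exp (f x) = Complex.exp (g x)) {x y : X} (hx : x ∈ S) (hy : y ∈ S) :
    f x - g x = f y - g y := by
  let periods : AddSubgroup ℂ := AddSubgroup.zmultiples (2 * Real.pi * Complex.I)
  have hdiscrete : IsDiscrete (periods : Set ℂ) :=
    ⟨NormedSpace.discreteTopology_zmultiples (2 * Real.pi * Complex.I)⟩
  refine hS.constant_of_mapsTo hdiscrete (hf.sub hg) (fun w hw ↦ ?_) hx hy
  obtain ⟨n, hn⟩ := Complex.exp_eq_exp_iff_exists_int.1 (hexp w hw)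
  exact AddSubgroup.mem_zmultiples_iff.2 ⟨n, by simp [hn]⟩

theorem continuousOn_indicator_connectedComponentIn [LocallyConnectedSpace X] {A B : Set X}
    (hA : IsClosed A) (hB : IsClosed B) {r : X → ℂ} (hr : Continuous r) (hr0 : ∀ x ∈ B, r x = 0)
    (a : X) : ContinuousOn (indicator (connectedComponentIn (A ∪ B)ᶜ a) r) Aᶜ := by
  classical
  rw [← piecewise_eq_indicator]
  refine ContinuousOn.piecewise (fun x hx ↦ ?_) hr.continuousOn continuousOn_const
  exact hr0 x ((frontier_connectedComponentIn_compl_subset (hA.union hB) a hx.2).resolve_left hx.1)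

-- With `ρ = 1` on `A` and `ρ = 0` on `B`, cut off to the component `P` of `a`, the functions `s`
-- and `t = s - 1_P` define the same nonvanishing `exp (2πi s) = exp (2πi t)`. Comparing with a
-- logarithm of it, `s` and `t` have equal increments from `a` to `b`, which forces `b ∈ P`.
theorem mem_connectedComponentIn_compl_union [NormalSpace X] [SimplyConnectedSpace X]
    [LocallyPathConnectedSpace X] {A B : Set X} (hA : IsClosed A) (hB : IsClosed B)
    (hAB : Disjoint A B) {a b : X} (hbA : b ∈ connectedComponentIn Aᶜ a)
    (hbB : b ∈ connectedComponentIn Bᶜ a) : b ∈ connectedComponentIn (A ∪ B)ᶜ a := by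
  have haA : a ∈ Aᶜ := connectedComponentIn_nonempty_iff.1 ⟨b, hbA⟩
  have haB : a ∈ Bᶜ := connectedComponentIn_nonempty_iff.1 ⟨b, hbB⟩
  by_contra hb
  obtain ⟨ρ, hρB, hρA, -⟩ := exists_continuous_zero_one_of_isClosed hB hA hAB.symm
  let period : ℂ := 2 * Real.pi * Complex.I
  set P := connectedComponentIn (A ∪ B)ᶜ a with hP
  let s : X → ℂ := fun x ↦ period * P.indicator (fun x ↦ (ρ x : ℂ)) x
  let t : X → ℂ := fun x ↦ period * P.indicator (fun x ↦ (ρ x : ℂ) - 1) x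
  have hs : ContinuousOn s Aᶜ := continuousOn_const.mul <|
    continuousOn_indicator_connectedComponentIn hA hB (by fun_prop) (by simp +contextual [hρB _]) a
  have ht : ContinuousOn t Bᶜ := by
    rw [union_comm] at hP
    exact continuousOn_const.mul (hP ▸
      continuousOn_indicator_connectedComponentIn hB hA (by fun_prop)
        (by simp +contextual [hρA _]) a)
  have hst (x : X) : Complex.exp (s x) = Complex.exp (t x) := by
    by_cases hx : x ∈ P
    · simp [s, t, period, hx, mul_sub, Complex.exp_sub]
    · simp [s, t, hx]
  have hexp : Continuous fun x ↦ Complex.exp (s x) := by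
    rw [← continuousOn_univ, ← compl_empty, ← hAB.inter_eq, compl_inter]
    exact hs.cexp.union_of_isOpen (ht.cexp.congr fun x _ ↦ hst x) hA.isOpen_compl hB.isOpen_compl
  obtain ⟨θ, hθ⟩ := exists_continuousMap_exp_eq hexp fun x ↦ Complex.exp_ne_zero _
  have hincr_s := sub_eq_sub_of_exp_eq isPreconnected_connectedComponentIn
    (hs.mono (connectedComponentIn_subset _ a)) θ.continuous.continuousOn
    (fun x _ ↦ (hθ x).symm) (mem_connectedComponentIn haA) hbA
  have hincr_t := sub_eq_sub_of_exp_eq isPreconnected_connectedComponentIn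
    (ht.mono (connectedComponentIn_subset _ a)) θ.continuous.continuousOn
    (fun x _ ↦ (hst x).symm.trans (hθ x).symm) (mem_connectedComponentIn haB) hbB
  have haP : a ∈ P := mem_connectedComponentIn (by simp_all)
  have hperiod : period = 0 := by
    simp only [s, t, indicator_of_mem haP, indicator_of_notMem hb] at hincr_s hincr_t
    linear_combination hincr_s - hincr_t
  exact Complex.two_pi_I_ne_zero hperiod

theorem connectedComponentIn_compl_union [NormalSpace X] [SimplyConnectedSpace X]
    [LocallyPathConnectedSpace X] {A B : Set X} (hA : IsClosed A) (hB : IsClosed B)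
    (hAB : Disjoint A B) (x : X) :
    connectedComponentIn (A ∪ B)ᶜ x = connectedComponentIn Aᶜ x ∩ connectedComponentIn Bᶜ x :=
  (compl_union A B ▸ connectedComponentIn_inter_subset).antisymm fun _ hy ↦
    mem_connectedComponentIn_compl_union hA hB hAB hy.1 hy.2

end Janiszewski

section Biholomorphism

theorem not_eventually_eq_of_injOn {X Y : Type*} [TopologicalSpace X] {U : Set X} {z : X}
    [(nhdsWithin z {z}ᶜ).NeBot] (hU : U ∈ nhds z) {f : X → Y} (hf : InjOn f U) :
    ¬ ∀ᶠ w in nhds z, f w = f z := fun hconst ↦ by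
  obtain ⟨w, ⟨hfw, hwU⟩, hwz⟩ := (((hconst.and hU).filter_mono nhdsWithin_le_nhds).and
    (self_mem_nhdsWithin (s := {z}ᶜ))).exists
  exact hwz (hf hwU (mem_of_mem_nhds hU) hfw)

theorem exists_openPartialHomeomorph_of_injOn {U : Set ℂ} (hU : IsOpen U) {f : ℂ → ℂ}
    (hf : DifferentiableOn ℂ f U) (hinj : InjOn f U) :
    ∃ e : OpenPartialHomeomorph ℂ ℂ, e.source = U ∧ ⇑e = f := by
  have hopen : IsOpenMap (U.domRestrict f) := IsOpenMap.of_nhds_le fun z ↦ by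
    have hUz := hU.mem_nhds z.2
    rw [U.domRestrict_eq, ← Filter.map_map, map_nhds_subtype_coe_eq_nhds z.2 hUz]
    exact (hf.analyticAt hUz).eventually_constant_or_nhds_le_map_nhds.resolve_left
      (not_eventually_eq_of_injOn hUz hinj)
  exact ⟨.ofContinuousOpenRestrict (hinj.toPartialEquiv f U) hf.continuousOn hopen hU, rfl, rfl⟩

theorem eventually_deriv_ne_zero_of_injOn {U : Set ℂ} {z : ℂ} (hU : U ∈ nhds z) {f : ℂ → ℂ}
    (hf : DifferentiableOn ℂ f U) (hinj : InjOn f U) :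
    ∀ᶠ w in nhdsWithin z {z}ᶜ, deriv f w ≠ 0 := by
  refine (hf.analyticAt hU).deriv.eventually_eq_zero_or_eventually_ne_zero.resolve_left
    fun hderiv ↦ not_eventually_eq_of_injOn hU hinj ?_
  obtain ⟨r, hr, hball⟩ := Metric.eventually_nhds_iff_ball.1 (hderiv.and hU)
  filter_upwards [ball_mem_nhds z hr] with w hw
  exact isOpen_ball.is_const_of_deriv_eq_zero (convex_ball z r).isPreconnected
    (hf.mono fun x hx ↦ (hball x hx).2) (fun x hx ↦ (hball x hx).1) hw (mem_ball_self hr)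

theorem differentiableOn_symm {e : OpenPartialHomeomorph ℂ ℂ}
    (he : DifferentiableOn ℂ e e.source) : DifferentiableOn ℂ e.symm e.target := by
  intro w hw
  have hz := e.open_source.mem_nhds (e.map_target hw)
  have hpunctured : Tendsto e.symm (nhdsWithin w {w}ᶜ) (nhdsWithin (e.symm w) {e.symm w}ᶜ) := by
    refine tendsto_nhdsWithin_iff.2 ⟨(e.continuousAt_symm hw).mono_left nhdsWithin_le_nhds, ?_⟩
    filter_upwards [nhdsWithin_le_nhds (e.open_target.mem_nhds hw), self_mem_nhdsWithin]
      with v hv hvw using fun h ↦ hvw (e.symm.injOn hv hw h)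
  refine (Complex.analyticAt_of_differentiable_on_punctured_nhds_of_continuousAt ?_
    (e.continuousAt_symm hw)).differentiableAt.differentiableWithinAt
  filter_upwards [hpunctured.eventually (eventually_deriv_ne_zero_of_injOn hz he e.injOn),
    nhdsWithin_le_nhds (e.open_target.mem_nhds hw)] with v hderiv hv
  exact (e.hasDerivAt_symm hv hderiv (he.differentiableAt
    (e.open_source.mem_nhds (e.map_target hv))).hasDerivAt).differentiableAt

end Biholomorphism

section Counting

/-- The set of connected components of a subset `S` of a topological space. -/
def componentsIn {X : Type*} [TopologicalSpace X] (S : Set X) : Set (Set X) :=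
  connectedComponentIn S '' S

variable {X : Type*} [TopologicalSpace X]

theorem encard_image_eq_encard_image {α β γ : Type*} {s : Set α} {f : α → β} {g : α → γ}
    (h : ∀ a ∈ s, ∀ b ∈ s, f a = f b ↔ g a = g b) : (f '' s).encard = (g '' s).encard := by
  obtain ⟨t, hts, hft⟩ := exists_subset_bijOn s f
  have hgt : BijOn g t (g '' s) := by
    refine ⟨(mapsTo_image g s).mono_left hts, fun a ha b hb hab ↦
      hft.injOn ha hb ((h a (hts ha) b (hts hb)).2 hab), ?_⟩
    rintro _ ⟨a, ha, rfl⟩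
    obtain ⟨b, hb, hba⟩ := hft.surjOn (mem_image_of_mem f ha)
    exact ⟨b, hb, (h b (hts hb) a ha).1 hba⟩
  rw [← hft.image_eq, ← hgt.image_eq, hft.injOn.encard_image, hgt.injOn.encard_image]

theorem connectedComponentIn_eq_iff_mem {F : Set X} {x y : X} (hy : y ∈ F) :
    connectedComponentIn F x = connectedComponentIn F y ↔ y ∈ connectedComponentIn F x :=
  ⟨fun h ↦ h ▸ mem_connectedComponentIn hy, connectedComponentIn_eq⟩

theorem componentsIn_compl_eq_image [LocallyConnectedSpace X] [PreconnectedSpace X] {K U : Set X}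
    (hK : IsClosed K) (hne : K.Nonempty) (hU : IsOpen U) (hKU : K ⊆ U) :
    componentsIn Kᶜ = connectedComponentIn Kᶜ '' (U \ K) := by
  refine (image_mono fun x hx ↦ hx.2).antisymm' ?_
  rintro _ ⟨x, hx, rfl⟩
  obtain ⟨y, hy, hyU⟩ := connectedComponentIn_compl_inter_nonempty hK hne hU hKU hx
  exact ⟨y, ⟨hyU, connectedComponentIn_subset _ _ hy⟩, (connectedComponentIn_eq hy).symm⟩

variable [SimplyConnectedSpace X] [LocallyPathConnectedSpace X]
variable {Y : Type*} [TopologicalSpace Y]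

theorem map_mem_connectedComponentIn_compl_image [NormalSpace X] {e : OpenPartialHomeomorph X Y}
    (he : IsPreconnected e.source) {K : Set X} (hK : IsClosed K) (hKe : K ⊆ e.source) {x y : X}
    (hx : x ∈ e.source) (hy : y ∈ e.source) (hxy : y ∈ connectedComponentIn Kᶜ x) :
    e y ∈ connectedComponentIn (e '' K)ᶜ (e x) := by
  have hy' : y ∈ connectedComponentIn (e.source ∩ Kᶜ) x := by
    rw [← compl_compl e.source, ← compl_union]
    refine mem_connectedComponentIn_compl_union e.open_source.isClosed_compl hK
      (disjoint_compl_left_iff_subset.2 hKe) ?_ hxy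
    rw [compl_compl]
    exact he.subset_connectedComponentIn hx subset_rfl hy
  have hmaps : MapsTo e (e.source ∩ Kᶜ) (e '' K)ᶜ := by
    rintro w ⟨hw, hwK⟩ ⟨k, hk, hkw⟩
    exact hwK (e.injOn (hKe hk) hw hkw ▸ hk)
  exact connectedComponentIn_mono (e x) hmaps.image_subset
    ((e.continuousOn.mono inter_subset_left).mapsTo_connectedComponentIn
      (connectedComponentIn_nonempty_iff.1 ⟨y, hy'⟩) hy')

variable [T4Space X] [T4Space Y] [SimplyConnectedSpace Y] [LocallyPathConnectedSpace Y]
variable {e : OpenPartialHomeomorph X Y} {K : Set X}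

theorem map_mem_connectedComponentIn_compl_image_iff (he : IsPreconnected e.source)
    (hK : IsCompact K) (hKe : K ⊆ e.source) {x y : X} (hx : x ∈ e.source) (hy : y ∈ e.source) :
    e y ∈ connectedComponentIn (e '' K)ᶜ (e x) ↔ y ∈ connectedComponentIn Kᶜ x := by
  refine ⟨fun hxy ↦ ?_, map_mem_connectedComponentIn_compl_image he hK.isClosed hKe hx hy⟩
  have htarget : IsPreconnected e.symm.source := by
    rw [e.symm_source, ← e.image_source_eq_target]
    exact he.image e e.continuousOn
  have hsymm := map_mem_connectedComponentIn_compl_image htarget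
    (hK.image_of_continuousOn (e.continuousOn.mono hKe)).isClosed
    (image_subset_iff.2 fun w hw ↦ e.map_source (hKe hw)) (e.map_source hx) (e.map_source hy) hxy
  rwa [(e.leftInvOn.mono hKe).image_image, e.left_inv hx, e.left_inv hy] at hsymm

theorem encard_componentsIn_compl_image (he : IsPreconnected e.source) (hK : IsCompact K)
    (hne : K.Nonempty) (hKe : K ⊆ e.source) :
    (componentsIn (e '' K)ᶜ).encard = (componentsIn Kᶜ).encard := by
  have hKe' : e '' K ⊆ e.target := image_subset_iff.2 fun w hw ↦ e.map_source (hKe hw)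
  have hdiff : e.target \ e '' K = e '' (e.source \ K) := by
    rw [e.injOn.image_sdiff_subset hKe, e.image_source_eq_target]
  rw [componentsIn_compl_eq_image (hK.image_of_continuousOn (e.continuousOn.mono hKe)).isClosed
      (hne.image e) e.open_target hKe', hdiff, image_image,
    componentsIn_compl_eq_image hK.isClosed hne e.open_source hKe]
  refine encard_image_eq_encard_image fun x hx y hy ↦ ?_
  have hey : e y ∈ (e '' K)ᶜ := (hdiff.ge (mem_image_of_mem e hy)).2
  rw [connectedComponentIn_eq_iff_mem hey, connectedComponentIn_eq_iff_mem hy.2,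
    map_mem_connectedComponentIn_compl_image_iff he hK hKe hx.1 hy.1]

end Counting

section CompactConnected

variable {X : Type*} [TopologicalSpace X] [T2Space X] [LocallyCompactSpace X]

theorem exists_isCompact_isPreconnected_mem_nhds [LocallyConnectedSpace X] {U : Set X} {x : X}
    (hU : U ∈ nhds x) : ∃ N ∈ nhds x, IsCompact N ∧ IsPreconnected N ∧ N ⊆ U := by
  obtain ⟨C, hC, hCU, hcompact⟩ := local_compact_nhds hU
  have hsub : closure (connectedComponentIn C x) ⊆ C :=
    closure_minimal (connectedComponentIn_subset C x) hcompact.isClosed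
  exact ⟨_, mem_of_superset (connectedComponentIn_mem_nhds hC) subset_closure,
    hcompact.of_isClosed_subset isClosed_closure hsub,
    isPreconnected_connectedComponentIn.closure, hsub.trans hCU⟩

theorem exists_isCompact_isConnected_superset [LocallyPathConnectedSpace X] {G K : Set X}
    (hG : IsOpen G) (hGc : IsConnected G) (hK : IsCompact K) (hKG : K ⊆ G) :
    ∃ K', IsCompact K' ∧ IsConnected K' ∧ K' ⊆ G ∧ K ⊆ K' := by
  obtain ⟨x₀, hx₀⟩ := hGc.nonempty
  have hp : IsPathConnected G := hG.isConnected_iff_isPathConnected.1 hGc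
  suffices h : ∃ K', IsCompact K' ∧ IsPreconnected K' ∧ K' ⊆ G ∧ x₀ ∈ K' ∧ K ⊆ K' by
    obtain ⟨K', hcompact, hconn, hsub, hmem, hsup⟩ := h
    exact ⟨K', hcompact, ⟨⟨x₀, hmem⟩, hconn⟩, hsub, hsup⟩
  refine hK.induction_on
    (p := fun S ↦ ∃ K', IsCompact K' ∧ IsPreconnected K' ∧ K' ⊆ G ∧ x₀ ∈ K' ∧ S ⊆ K') ?_ ?_ ?_ ?_
  · exact ⟨{x₀}, isCompact_singleton, isPreconnected_singleton, by simpa using hx₀, rfl,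
      empty_subset _⟩
  · rintro S T hST ⟨K', hcompact, hconn, hsub, hmem, hsup⟩
    exact ⟨K', hcompact, hconn, hsub, hmem, hST.trans hsup⟩
  · rintro S T ⟨A, hA, hAc, hAG, hAx, hSA⟩ ⟨B, hB, hBc, hBG, hBx, hTB⟩
    exact ⟨A ∪ B, hA.union hB, hAc.union x₀ hAx hBx hBc, union_subset hAG hBG, Or.inl hAx,
      union_subset_union hSA hTB⟩
  · intro x hx
    obtain ⟨N, hN, hNcompact, hNc, hNG⟩ :=
      exists_isCompact_isPreconnected_mem_nhds (hG.mem_nhds (hKG hx))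
    obtain ⟨γ, hγ⟩ := hp.joinedIn x₀ hx₀ x (hKG hx)
    exact ⟨N, mem_nhdsWithin_of_mem_nhds hN, range γ ∪ N,
      (isCompact_range γ.continuous).union hNcompact,
      (isPreconnected_range γ.continuous).union x ⟨1, γ.target⟩ (mem_of_mem_nhds hN) hNc,
      union_subset (range_subset_iff.2 hγ) hNG, Or.inl ⟨0, γ.source⟩, subset_union_right⟩

end CompactConnected

section ClopenSeparation

variable {X : Type*} [TopologicalSpace X] [T2Space X]

theorem exists_isClopen_subset_of_connectedComponent_subset [CompactSpace X] {a : X} {O : Set X}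
    (hO : IsOpen O) (haO : connectedComponent a ⊆ O) : ∃ S, IsClopen S ∧ a ∈ S ∧ S ⊆ O := by
  have : Nonempty { s : Set X // IsClopen s ∧ a ∈ s } := ⟨univ, isClopen_univ, mem_univ a⟩
  rw [connectedComponent_eq_iInter_isClopen] at haO
  obtain ⟨S, hS⟩ := exists_subset_nhds_of_compactSpace
    (V := fun s : { s : Set X // IsClopen s ∧ a ∈ s } ↦ s.1)
    (fun s t ↦ ⟨⟨s ∩ t, s.2.1.inter t.2.1, s.2.2, t.2.2⟩, inter_subset_left, inter_subset_right⟩)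
    (fun s ↦ s.2.1.isClosed) fun x hx ↦ hO.mem_nhds (haO hx)
  exact ⟨S, S.2.1, S.2.2, hS⟩

theorem isClosed_connectedComponentIn {X : Type*} [TopologicalSpace X] {F : Set X}
    (hF : IsClosed F) {x : X} : IsClosed (connectedComponentIn F x) := by
  by_cases hx : x ∈ F
  · exact isClosed_of_closure_subset
      (isPreconnected_connectedComponentIn.closure.subset_connectedComponentIn
        (subset_closure (mem_connectedComponentIn hx))
        (closure_minimal (connectedComponentIn_subset F x) hF))
  · simp only [connectedComponentIn_eq_empty hx, isClosed_empty]

variable [LocallyCompactSpace X] {F O : Set X} {a : X}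

theorem exists_isCompact_isClosed_diff (hF : IsClosed F) (ha : a ∈ F)
    (hC : IsCompact (connectedComponentIn F a)) (hO : IsOpen O)
    (hCO : connectedComponentIn F a ⊆ O) :
    ∃ S, IsCompact S ∧ a ∈ S ∧ S ⊆ O ∧ IsClosed (F \ S) := by
  obtain ⟨W, hW, hCW, hWO, hWc⟩ := exists_open_between_and_isCompact_closure hC hO hCO
  set E := F ∩ closure W
  have : CompactSpace E := isCompact_iff_compactSpace.1 (hWc.inter_left hF)
  have haE : a ∈ E := ⟨ha, subset_closure (hCW (mem_connectedComponentIn ha))⟩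
  obtain ⟨S, hS, haS, hSW⟩ := exists_isClopen_subset_of_connectedComponent_subset (a := ⟨a, haE⟩)
    (hW.preimage (continuous_subtype_val (p := (· ∈ E)))) (by
      rw [← image_subset_iff, ← connectedComponentIn_eq_image haE]
      exact (connectedComponentIn_mono a inter_subset_left).trans hCW)
  rw [← image_subset_iff] at hSW
  have hdiff : F \ Subtype.val '' S = Subtype.val '' Sᶜ ∪ (F \ W) := by
    ext x
    constructor
    · rintro ⟨hxF, hxS⟩
      refine (em (x ∈ W)).imp (fun hxW ↦ ?_) fun hxW ↦ ⟨hxF, hxW⟩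
      exact ⟨⟨x, hxF, subset_closure hxW⟩, fun h ↦ hxS ⟨_, h, rfl⟩, rfl⟩
    · rintro (⟨y, hy, rfl⟩ | ⟨hxF, hxW⟩)
      · exact ⟨y.2.1, fun h ↦ hy (Subtype.val_injective.mem_set_image.1 h)⟩
      · exact ⟨hxF, fun h ↦ hxW (hSW h)⟩
  refine ⟨Subtype.val '' S, hS.isClosed.isCompact.image continuous_subtype_val,
    ⟨_, haS, rfl⟩, hSW.trans (subset_closure.trans hWO), ?_⟩
  rw [hdiff]
  exact (hS.compl.isClosed.isCompact.image continuous_subtype_val).isClosed.union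
    (hF.sdiff hW)

theorem exists_isOpen_disjoint_frontier (hF : IsClosed F) (ha : a ∈ F)
    (hC : IsCompact (connectedComponentIn F a)) (hO : IsOpen O)
    (hCO : connectedComponentIn F a ⊆ O) :
    ∃ V, IsOpen V ∧ a ∈ V ∧ closure V ⊆ O ∧ IsCompact (closure V) ∧ Disjoint (frontier V) F := by
  obtain ⟨S, hS, haS, hSO, hFS⟩ := exists_isCompact_isClosed_diff hF ha hC hO hCO
  obtain ⟨V, hV, hSV, hVsub, hVc⟩ := exists_open_between_and_isCompact_closure hS
    (hO.sdiff hFS) fun x hx ↦ ⟨hSO hx, fun h ↦ h.2 hx⟩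
  refine ⟨V, hV, hSV haS, hVsub.trans sdiff_subset, hVc, disjoint_left.2 fun x hx hxF ↦ ?_⟩
  rw [hV.frontier_eq] at hx
  exact (hVsub hx.1).2 ⟨hxF, fun hxS ↦ hx.2 (hSV hxS)⟩

end ClopenSeparation

theorem connectedComponentIn_compl_frontier_subset {X : Type*} [TopologicalSpace X] {V : Set X}
    (hV : IsOpen V) {a : X} (ha : a ∈ V) : connectedComponentIn (frontier V)ᶜ a ⊆ V := by
  have haV : a ∈ (frontier V)ᶜ := by simp [hV.frontier_eq, ha]
  refine isPreconnected_connectedComponentIn.subset_of_closure_inter_subset hV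
    ⟨a, mem_connectedComponentIn haV, ha⟩ fun x ⟨hx, hxc⟩ ↦ ?_
  by_contra hxV
  exact connectedComponentIn_subset _ _ hxc (hV.frontier_eq ▸ ⟨hx, hxV⟩)

section Exterior

variable {E : Type*} [NormedAddCommGroup E] [NormedSpace ℝ E] {K : Set E} {R : ℝ} {x y : E}

theorem isPreconnected_compl_closedBall (hE : 1 < Module.rank ℝ E) (hR : 0 ≤ R) :
    IsPreconnected (closedBall (0 : E) R)ᶜ := by
  have himage : (closedBall (0 : E) R)ᶜ = (fun x ↦ (1 + R * ‖x‖⁻¹) • x) '' {0}ᶜ := by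
    ext y
    simp only [mem_compl_iff, mem_closedBall_zero_iff, not_le, mem_image, mem_singleton_iff]
    constructor
    · intro hy
      have hy0 : ‖y‖ ≠ 0 := (hR.trans_lt hy).ne'
      have hpos : 0 < 1 - R * ‖y‖⁻¹ := by
        rw [sub_pos, ← div_eq_mul_inv, div_lt_one (hR.trans_lt hy)]
        exact hy
      refine ⟨(1 - R * ‖y‖⁻¹) • y, smul_ne_zero hpos.ne' (norm_ne_zero_iff.1 hy0), ?_⟩
      have hsub : ‖y‖ - R ≠ 0 := (sub_pos.2 hy).ne'
      rw [norm_smul, Real.norm_of_nonneg hpos.le, smul_smul]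
      convert! one_smul ℝ y using 2
      field_simp
      ring
    · rintro ⟨x, hx, rfl⟩
      have hx0 : 0 < ‖x‖ := norm_pos_iff.2 hx
      rw [norm_smul, Real.norm_of_nonneg (by positivity), add_mul, one_mul,
        inv_mul_cancel_right₀ hx0.ne']
      linarith
  rw [himage]
  refine (isConnected_compl_singleton_of_one_lt_rank hE 0).isPreconnected.image _ ?_
  refine ContinuousOn.smul (continuousOn_const.add (continuousOn_const.mul ?_)) continuousOn_id
  exact continuousOn_id.norm.inv₀ fun x hx ↦ norm_ne_zero_iff.2 hx

theorem compl_closedBall_subset_connectedComponentIn (hE : 1 < Module.rank ℝ E) (hR : 0 ≤ R)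
    (hK : K ⊆ closedBall 0 R) (hy : y ∈ connectedComponentIn Kᶜ x) (hyR : y ∉ closedBall 0 R) :
    (closedBall 0 R)ᶜ ⊆ connectedComponentIn Kᶜ x := by
  rw [connectedComponentIn_eq hy]
  exact (isPreconnected_compl_closedBall hE hR).subset_connectedComponentIn hyR
    (compl_subset_compl.2 hK)

theorem connectedComponentIn_compl_subset_closedBall (hE : 1 < Module.rank ℝ E) (hR : 0 ≤ R)
    (hK : K ⊆ closedBall 0 R) (hb : IsBounded (connectedComponentIn Kᶜ x)) :
    connectedComponentIn Kᶜ x ⊆ closedBall 0 R := by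
  by_contra! hsub
  obtain ⟨y, hy, hyR⟩ := not_subset.1 hsub
  have : Nontrivial E := rank_pos_iff_nontrivial.1 (zero_lt_one.trans hE)
  refine NormedSpace.unbounded_univ ℝ E ?_
  rw [← union_compl_self (closedBall (0 : E) R)]
  exact isBounded_closedBall.union
    (hb.subset (compl_closedBall_subset_connectedComponentIn hE hR hK hy hyR))

theorem connectedComponentIn_compl_eq_of_not_isBounded (hE : 1 < Module.rank ℝ E)
    (hK : IsBounded K) (hx : ¬ IsBounded (connectedComponentIn Kᶜ x))
    (hy : ¬ IsBounded (connectedComponentIn Kᶜ y)) :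
    connectedComponentIn Kᶜ x = connectedComponentIn Kᶜ y := by
  obtain ⟨R, hR, hKR⟩ := hK.subset_closedBall_lt 0 0
  have meets_exterior {z : E} (hz : ¬ IsBounded (connectedComponentIn Kᶜ z)) :
      ∃ w ∈ connectedComponentIn Kᶜ z, w ∉ closedBall 0 R :=
    not_subset.1 fun h ↦ hz (isBounded_closedBall.subset h)
  obtain ⟨u, hu, huR⟩ := meets_exterior hx
  obtain ⟨v, hv, hvR⟩ := meets_exterior hy
  rw [connectedComponentIn_eq hv, connectedComponentIn_eq
    (compl_closedBall_subset_connectedComponentIn hE hR.le hKR hu huR hvR)]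

end Exterior

section FillHoles

variable {G K : Set ℂ}

/-- The union of `K` and of its holes contained in `G`. Points of `K` belong to the set below
because `connectedComponentIn Kᶜ z` is empty for `z ∈ K`. -/
def fillHoles (G K : Set ℂ) : Set ℂ :=
  {z | IsBounded (connectedComponentIn Kᶜ z) ∧ connectedComponentIn Kᶜ z ⊆ G}

theorem subset_fillHoles : K ⊆ fillHoles G K := fun z hz ↦ by
  simp [fillHoles, connectedComponentIn_eq_empty (F := Kᶜ) (not_not_intro hz)]

theorem fillHoles_subset (hKG : K ⊆ G) : fillHoles G K ⊆ G := fun z hz ↦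
  (em (z ∈ K)).elim (@hKG z) fun hzK ↦ hz.2 (mem_connectedComponentIn hzK)

theorem mem_fillHoles_iff_of_mem_connectedComponentIn {y z : ℂ}
    (hy : y ∈ connectedComponentIn Kᶜ z) : y ∈ fillHoles G K ↔ z ∈ fillHoles G K := by
  simp only [fillHoles, mem_ofPred_eq, connectedComponentIn_eq hy]

theorem isClosed_fillHoles (hK : IsClosed K) : IsClosed (fillHoles G K) := by
  rw [← isOpen_compl_iff, isOpen_iff_mem_nhds]
  intro z hz
  refine mem_of_superset (hK.isOpen_compl.connectedComponentIn.mem_nhds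
    (mem_connectedComponentIn fun hzK ↦ hz (subset_fillHoles hzK))) fun y hy ↦ ?_
  rwa [mem_compl_iff, mem_fillHoles_iff_of_mem_connectedComponentIn hy]

theorem isCompact_fillHoles (hK : IsCompact K) : IsCompact (fillHoles G K) := by
  obtain ⟨R, hR, hKR⟩ := hK.isBounded.subset_closedBall_lt 0 0
  refine (isCompact_closedBall 0 R).of_isClosed_subset (isClosed_fillHoles hK.isClosed)
    fun z hz ↦ (em (z ∈ K)).elim (@hKR z) fun hzK ↦ ?_
  exact connectedComponentIn_compl_subset_closedBall
    (Complex.rank_real_complex ▸ Nat.one_lt_ofNat) hR.le hKR hz.1 (mem_connectedComponentIn hzK)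

theorem isConnected_fillHoles (hK : IsClosed K) (hKc : IsConnected K) :
    IsConnected (fillHoles G K) := by
  obtain ⟨x₀, hx₀⟩ := hKc.nonempty
  refine ⟨⟨x₀, subset_fillHoles hx₀⟩, isPreconnected_of_forall x₀ fun y hy ↦ ?_⟩
  by_cases hyK : y ∈ K
  · exact ⟨K, subset_fillHoles, hx₀, hyK, hKc.isPreconnected⟩
  · refine ⟨_, union_subset (fun z hz ↦ ?_) subset_fillHoles, Or.inr hx₀,
      Or.inl (mem_connectedComponentIn hyK),
      isPreconnected_connectedComponentIn_compl_union hK hKc hyK⟩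
    rwa [mem_fillHoles_iff_of_mem_connectedComponentIn hz]

theorem omegaConvex_fillHoles : OmegaConvex G (fillHoles G K) := by
  rintro _ ⟨⟨z, hz, rfl⟩, hb⟩
  have hsub : connectedComponentIn Kᶜ z ⊆ connectedComponentIn (fillHoles G K)ᶜ z :=
    isPreconnected_connectedComponentIn.subset_connectedComponentIn
      (mem_connectedComponentIn fun hzK ↦ hz (subset_fillHoles hzK)) fun y hy ↦ by
        rwa [mem_compl_iff, mem_fillHoles_iff_of_mem_connectedComponentIn hy]
  by_contra hempty
  rw [not_nonempty_iff_eq_empty, ← sdiff_eq, sdiff_eq_empty] at hempty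
  exact hz ⟨hb.subset hsub, hsub.trans hempty⟩

end FillHoles

section Exhaustion

variable {G K : Set ℂ}

theorem encard_componentsIn_compl_le_one (hG : HasNoHole G) (hKG : K ⊆ G) (hKb : IsBounded K)
    (hK : OmegaConvex G K) : (componentsIn Kᶜ).encard ≤ 1 := by
  have unbounded {z : ℂ} (hz : z ∈ Kᶜ) : ¬ IsBounded (connectedComponentIn Kᶜ z) := fun hb ↦ by
    obtain ⟨p, hp, hpG⟩ := hK _ ⟨⟨z, hz, rfl⟩, hb⟩
    rw [connectedComponentIn_eq hp] at hb
    exact hG ⟨_, ⟨p, hpG, rfl⟩,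
      hb.subset (connectedComponentIn_mono p (compl_subset_compl.2 hKG))⟩
  rw [encard_le_one_iff_subsingleton]
  rintro _ ⟨x, hx, rfl⟩ _ ⟨y, hy, rfl⟩
  exact connectedComponentIn_compl_eq_of_not_isBounded
    (Complex.rank_real_complex ▸ Nat.one_lt_ofNat) hKb (unbounded hx) (unbounded hy)

theorem exists_isCompact_separating_hole (hG : IsOpen G) {a b : ℂ} (ha : a ∉ G)
    (hab : IsBounded (connectedComponentIn Gᶜ a)) (hb : b ∉ connectedComponentIn Gᶜ a) :
    ∃ K, IsCompact K ∧ K ⊆ G ∧ IsBounded (connectedComponentIn Kᶜ a) ∧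
      b ∉ connectedComponentIn Kᶜ a := by
  have hcompact : IsCompact (connectedComponentIn Gᶜ a) :=
    isCompact_of_isClosed_isBounded (isClosed_connectedComponentIn hG.isClosed_compl) hab
  obtain ⟨V, hV, haV, hVb, hVc, hdisj⟩ := exists_isOpen_disjoint_frontier hG.isClosed_compl ha
    hcompact isOpen_compl_singleton (subset_compl_singleton_iff.2 hb)
  have hsub := connectedComponentIn_compl_frontier_subset hV haV
  exact ⟨frontier V, hVc.of_isClosed_subset isClosed_frontier frontier_subset_closure,
    disjoint_compl_right_iff_subset.1 hdisj, hVc.isBounded.subset (hsub.trans subset_closure),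
    fun hbV ↦ hVb (subset_closure (hsub hbV)) rfl⟩

theorem exists_isCompact_two_lt_encard_componentsIn_compl (hG : IsOpen G)
    (hholes : ∃ C₁ C₂ : Set ℂ, IsHole G C₁ ∧ IsHole G C₂ ∧ C₁ ≠ C₂) :
    ∃ K, IsCompact K ∧ K ⊆ G ∧
      ∀ K', IsBounded K' → K' ⊆ G → K ⊆ K' → 2 < (componentsIn K'ᶜ).encard := by
  obtain ⟨_, _, ⟨⟨a, ha, rfl⟩, hab⟩, ⟨⟨b, hb, rfl⟩, hbb⟩, hne⟩ := hholes
  obtain ⟨A, hA, hAG, hAa, hAb⟩ :=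
    exists_isCompact_separating_hole hG ha hab (hne ∘ connectedComponentIn_eq)
  obtain ⟨B, hB, hBG, hBb, -⟩ :=
    exists_isCompact_separating_hole hG hb hbb (hne.symm ∘ connectedComponentIn_eq)
  refine ⟨A ∪ B, hA.union hB, union_subset hAG hBG, fun K' hK' hK'G hsub ↦ ?_⟩
  have ha_mono := connectedComponentIn_mono a
    (compl_subset_compl.2 (subset_union_left.trans hsub))
  have hb_mono := connectedComponentIn_mono b
    (compl_subset_compl.2 (subset_union_right.trans hsub))
  obtain ⟨c, hc⟩ : ∃ c, c ∉ K' ∪ connectedComponentIn K'ᶜ a ∪ connectedComponentIn K'ᶜ b := by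
    by_contra! hall
    exact NormedSpace.unbounded_univ ℂ ℂ
      (((hK'.union (hAa.subset ha_mono)).union (hBb.subset hb_mono)).subset fun x _ ↦ hall x)
  simp only [mem_union, not_or] at hc
  have haK : a ∈ K'ᶜ := fun h ↦ ha (hK'G h)
  have hbK : b ∈ K'ᶜ := fun h ↦ hb (hK'G h)
  have hthree : ({connectedComponentIn K'ᶜ a, connectedComponentIn K'ᶜ b,
      connectedComponentIn K'ᶜ c} : Set (Set ℂ)).encard = 3 := by
    refine encard_eq_three.2 ⟨_, _, _, ?_, ?_, ?_, rfl⟩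
    · exact fun h ↦ hAb (ha_mono ((connectedComponentIn_eq_iff_mem hbK).1 h))
    · exact fun h ↦ hc.1.2 ((connectedComponentIn_eq_iff_mem hc.1.1).1 h)
    · exact fun h ↦ hc.2 ((connectedComponentIn_eq_iff_mem hc.1.1).1 h)
  refine lt_of_lt_of_le ?_ (hthree.ge.trans (encard_le_encard ?_))
  · norm_num
  · rintro _ (rfl | rfl | rfl)
    exacts [mem_image_of_mem _ haK, mem_image_of_mem _ hbK, mem_image_of_mem _ hc.1.1]

theorem exists_isCompact_isConnected_omegaConvex_superset (hG : IsOpen G) (hGc : IsConnected G)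
    (hK : IsCompact K) (hKG : K ⊆ G) :
    ∃ K', IsCompact K' ∧ IsConnected K' ∧ K' ⊆ G ∧ K ⊆ K' ∧ OmegaConvex G K' := by
  obtain ⟨A, hA, hAc, hAG, hKA⟩ := exists_isCompact_isConnected_superset hG hGc hK hKG
  exact ⟨fillHoles G A, isCompact_fillHoles hA, isConnected_fillHoles hA.isClosed hAc,
    fillHoles_subset hAG, hKA.trans subset_fillHoles, omegaConvex_fillHoles⟩

theorem exists_isCompact_omegaConvex_encard_ne_two (hG : IsOpen G) (hGc : IsConnected G)
    (hGtop : HasNoHole G ∨ ∃ C₁ C₂ : Set ℂ, IsHole G C₁ ∧ IsHole G C₂ ∧ C₁ ≠ C₂)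
    (hK : IsCompact K) (hKG : K ⊆ G) :
    ∃ K', IsCompact K' ∧ IsConnected K' ∧ K' ⊆ G ∧ K ⊆ K' ∧ OmegaConvex G K' ∧
      (componentsIn K'ᶜ).encard ≠ 2 := by
  obtain ⟨L, hL, hLG, hLcard⟩ : ∃ L, IsCompact L ∧ L ⊆ G ∧ ∀ K', IsBounded K' → K' ⊆ G → L ⊆ K' →
      OmegaConvex G K' → (componentsIn K'ᶜ).encard ≠ 2 := by
    rcases hGtop with hno | hholes
    · exact ⟨∅, isCompact_empty, empty_subset G, fun K' hK' hK'G _ hconv ↦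
        ((encard_componentsIn_compl_le_one hno hK'G hK' hconv).trans_lt (by norm_num)).ne⟩
    · obtain ⟨L, hL, hLG, hcard⟩ := exists_isCompact_two_lt_encard_componentsIn_compl hG hholes
      exact ⟨L, hL, hLG, fun K' hK' hK'G hsub _ ↦ (hcard K' hK' hK'G hsub).ne'⟩
  obtain ⟨K', hK', hK'c, hK'G, hsub, hconv⟩ :=
    exists_isCompact_isConnected_omegaConvex_superset hG hGc (hK.union hL) (union_subset hKG hLG)
  exact ⟨K', hK', hK'c, hK'G, subset_union_left.trans hsub, hconv,
    hLcard K' hK'.isBounded hK'G (subset_union_right.trans hsub) hconv⟩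

end Exhaustion

section Gap

variable {X : Type*} [TopologicalSpace X]

/-- The region between two disjoint connected sets `A` and `B`: the intersection of the component
of `Aᶜ` containing `B` with the component of `Bᶜ` containing `A`. -/
def gap (A B : Set X) : Set X :=
  {z | (connectedComponentIn Aᶜ z ∩ B).Nonempty ∧ (connectedComponentIn Bᶜ z ∩ A).Nonempty}

variable {A B L : Set X}

theorem connectedComponentIn_compl_inter_nonempty_iff (hB : IsPreconnected B) (hAB : Disjoint A B)
    {b z : X} (hb : b ∈ B) :
    (connectedComponentIn Aᶜ z ∩ B).Nonempty ↔ z ∈ connectedComponentIn Aᶜ b := by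
  refine ⟨fun ⟨w, hw, hwB⟩ ↦ ?_, fun hz ↦ ⟨b, mem_connectedComponentIn_comm.1 hz, hb⟩⟩
  rw [mem_connectedComponentIn_comm, connectedComponentIn_eq hw]
  exact hB.subset_connectedComponentIn hwB hAB.subset_compl_left hb

theorem gap_eq_inter (hA : IsPreconnected A) (hB : IsPreconnected B) (hAB : Disjoint A B) {z : X}
    (hz : z ∈ gap A B) :
    gap A B = connectedComponentIn Aᶜ z ∩ connectedComponentIn Bᶜ z := by
  obtain ⟨⟨b, hzb, hb⟩, a, hza, ha⟩ := hz
  rw [connectedComponentIn_eq hzb, connectedComponentIn_eq hza]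
  exact ext fun w ↦ and_congr (connectedComponentIn_compl_inter_nonempty_iff hB hAB hb)
    (connectedComponentIn_compl_inter_nonempty_iff hA hAB.symm ha)

variable [LocallyConnectedSpace X]

theorem closure_gap_subset (hA : IsClosed A) (hB : IsClosed B) (hAc : IsPreconnected A)
    (hBc : IsPreconnected B) (hAB : Disjoint A B) : closure (gap A B) ⊆ gap A B ∪ (A ∪ B) := by
  intro z hz
  obtain ⟨w, hw⟩ := closure_nonempty_iff.1 ⟨z, hz⟩
  rw [gap_eq_inter hAc hBc hAB hw] at hz ⊢
  have hzA := closure_connectedComponentIn_compl_subset hA w (closure_mono inter_subset_left hz)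
  have hzB := closure_connectedComponentIn_compl_subset hB w (closure_mono inter_subset_right hz)
  grind

variable [PreconnectedSpace X]

theorem connectedComponentIn_compl_union_subset (hA : IsClosed A) (hAc : IsConnected A)
    (hAB : Disjoint A B) {z : X} (hz : z ∉ A) (hzB : Disjoint (connectedComponentIn Aᶜ z) B) :
    connectedComponentIn Aᶜ z ∪ A ⊆ connectedComponentIn Bᶜ z :=
  (isPreconnected_connectedComponentIn_compl_union hA hAc hz).subset_connectedComponentIn
    (Or.inl (mem_connectedComponentIn hz))
    (union_subset hzB.subset_compl_right hAB.subset_compl_right)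

theorem connectedComponentIn_compl_subset_gap (hA : IsClosed A) (hAc : IsConnected A)
    (hLA : Disjoint L A) (hAB : Disjoint A B) {a b x z : X} (ha : a ∈ A) (hb : b ∈ B) (hx : x ∈ L)
    (hab : B ⊆ connectedComponentIn Lᶜ a) (hgap : Disjoint (gap L A) B)
    (hzL : Disjoint (connectedComponentIn Aᶜ z) L)
    (hzB : Disjoint (connectedComponentIn Aᶜ z) B) :
    connectedComponentIn Aᶜ z ⊆ gap L B := by
  have hxB : Disjoint (connectedComponentIn Aᶜ x) B := disjoint_right.2 fun y hyB hy ↦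
    disjoint_right.1 hgap hyB ⟨⟨a, mem_connectedComponentIn_comm.1 (hab hyB), ha⟩,
      x, mem_connectedComponentIn_comm.1 hy, hx⟩
  have ha_x : a ∈ connectedComponentIn Bᶜ x := connectedComponentIn_compl_union_subset hA hAc hAB
    (disjoint_left.1 hLA hx) hxB (Or.inr ha)
  intro w hw
  rw [connectedComponentIn_eq hw] at hzL hzB
  have hwA : w ∉ A := connectedComponentIn_subset _ _ hw
  have ha_L : a ∈ connectedComponentIn Lᶜ w :=
    connectedComponentIn_compl_union_subset hA hAc hLA.symm hwA hzL (Or.inr ha)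
  have ha_B : a ∈ connectedComponentIn Bᶜ w :=
    connectedComponentIn_compl_union_subset hA hAc hAB hwA hzB (Or.inr ha)
  refine ⟨⟨b, connectedComponentIn_eq ha_L ▸ hab hb, hb⟩, x, ?_, hx⟩
  rw [connectedComponentIn_eq ha_B]
  exact mem_connectedComponentIn_comm.1 ha_x

end Gap

section UnionConvexity

variable {Ω A B L : Set ℂ}

theorem omegaConvex_union (hA : IsClosed A) (hB : IsClosed B) (hAc : IsConnected A)
    (hBc : IsConnected B) (hAB : Disjoint A B) (hAΩ : OmegaConvex Ω A) (hBΩ : OmegaConvex Ω B)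
    (hgap : IsBounded (gap A B) → ¬ gap A B ⊆ Ω) : OmegaConvex Ω (A ∪ B) := by
  rintro _ ⟨⟨z, hz, rfl⟩, hb⟩
  obtain ⟨hzA, hzB⟩ : z ∉ A ∧ z ∉ B := not_or.1 hz
  rw [connectedComponentIn_compl_union hA hB hAB] at hb ⊢
  by_cases hB_meets : Disjoint (connectedComponentIn Aᶜ z) B
  · rw [inter_eq_left.2 (subset_union_left.trans
      (connectedComponentIn_compl_union_subset hA hAc hAB hzA hB_meets))] at hb ⊢
    exact hAΩ _ ⟨⟨z, hzA, rfl⟩, hb⟩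
  by_cases hA_meets : Disjoint (connectedComponentIn Bᶜ z) A
  · rw [inter_eq_right.2 (subset_union_left.trans
      (connectedComponentIn_compl_union_subset hB hBc hAB.symm hzB hA_meets))] at hb ⊢
    exact hBΩ _ ⟨⟨z, hzB, rfl⟩, hb⟩
  rw [← gap_eq_inter hAc.isPreconnected hBc.isPreconnected hAB
    ⟨not_disjoint_iff_nonempty_inter.1 hB_meets, not_disjoint_iff_nonempty_inter.1 hA_meets⟩]
    at hb ⊢
  exact inter_compl_nonempty_iff.2 (hgap hb)

theorem two_lt_encard_componentsIn_compl_of_gap_subset (hBb : IsBounded B)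
    (hne : B.Nonempty) (hA : A.Nonempty) (hAB : Disjoint A B) (hAΩ : OmegaConvex Ω A) (hBΩ : B ⊆ Ω)
    (hcard : (componentsIn Bᶜ).encard ≠ 2) (hb : IsBounded (gap A B)) (hgap : gap A B ⊆ Ω) :
    2 < (componentsIn Bᶜ).encard := by
  by_contra! hle
  have hone : (componentsIn Bᶜ).Subsingleton :=
    encard_le_one_iff_subsingleton.1 (Order.le_of_lt_succ (hle.lt_of_ne hcard))
  obtain ⟨a, ha⟩ := hA
  obtain ⟨b, hbB⟩ := hne
  have hsub : connectedComponentIn Aᶜ b ⊆ gap A B ∪ B := fun z hz ↦ by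
    refine (em (z ∈ B)).elim Or.inr fun hzB ↦ Or.inl
      ⟨⟨b, mem_connectedComponentIn_comm.1 hz, hbB⟩, a, ?_, ha⟩
    have haB : a ∈ Bᶜ := disjoint_left.1 hAB ha
    rw [hone (mem_image_of_mem _ hzB) (mem_image_of_mem _ haB)]
    exact mem_connectedComponentIn haB
  obtain ⟨p, hp, hpΩ⟩ := hAΩ _ ⟨⟨b, disjoint_right.1 hAB hbB, rfl⟩, (hb.union hBb).subset hsub⟩
  exact hpΩ (union_subset hgap hBΩ (hsub hp))

theorem not_gap_subset_of_two_lt_encard (hA : IsClosed A) (hAc : IsConnected A)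
    (hL : IsConnected L) (hB : IsConnected B) (hLA : Disjoint L A) (hLB : Disjoint L B)
    (hAB : Disjoint A B) (hAΩ : OmegaConvex Ω A) (hcard : 2 < (componentsIn Aᶜ).encard) {a b : ℂ}
    (ha : a ∈ A) (hb : b ∈ B) (hab : connectedComponentIn Lᶜ a = connectedComponentIn Lᶜ b)
    (hgapA : Disjoint (gap L A) B) (hbdd : IsBounded (gap L B)) : ¬ gap L B ⊆ Ω := by
  intro hgapB
  obtain ⟨x, hx⟩ := hL.nonempty
  obtain ⟨_, ⟨z, hz, rfl⟩, hne⟩ : (componentsIn Aᶜ \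
      ({connectedComponentIn Aᶜ x, connectedComponentIn Aᶜ b} : Set (Set ℂ))).Nonempty := by
    rw [sdiff_nonempty]
    refine fun hsub ↦ hcard.not_ge ((encard_mono hsub).trans ((encard_insert_le _ _).trans ?_))
    rw [encard_singleton, one_add_one_eq_two]
  have disjoint_of_ne {S : Set ℂ} (hS : IsConnected S) (hAS : Disjoint A S) {y : ℂ} (hy : y ∈ S)
      (hzy : connectedComponentIn Aᶜ z ≠ connectedComponentIn Aᶜ y) :
      Disjoint (connectedComponentIn Aᶜ z) S := by
    by_contra hmeet
    rw [not_disjoint_iff_nonempty_inter,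
      connectedComponentIn_compl_inter_nonempty_iff hS.isPreconnected hAS hy] at hmeet
    exact hzy (connectedComponentIn_eq hmeet).symm
  rw [mem_insert_iff, mem_singleton_iff, not_or] at hne
  have hsub : connectedComponentIn Aᶜ z ⊆ gap L B :=
    connectedComponentIn_compl_subset_gap hA hAc hLA hAB ha hb hx
      (hab ▸ hB.isPreconnected.subset_connectedComponentIn hb hLB.subset_compl_left) hgapA
      (disjoint_of_ne hL hLA.symm hx hne.1) (disjoint_of_ne hB hAB hb hne.2)
  obtain ⟨p, hp, hpΩ⟩ := hAΩ _ ⟨⟨z, hz, rfl⟩, hbdd.subset hsub⟩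
  exact hpΩ (hgapB (hsub hp))

end UnionConvexity

section FiniteComponents

theorem finite_image_connectedComponentIn {X : Type*} [TopologicalSpace X]
    [LocallyConnectedSpace X] {U S : Set X} (hU : IsOpen U) (hS : IsCompact S) (hSU : S ⊆ U) :
    (connectedComponentIn U '' S).Finite := by
  obtain ⟨t, -, hcover⟩ := hS.elim_nhds_subcover (connectedComponentIn U)
    fun x hx ↦ connectedComponentIn_mem_nhds (hU.mem_nhds (hSU hx))
  refine (t.finite_toSet.image (connectedComponentIn U)).subset ?_
  rintro _ ⟨x, hx, rfl⟩
  obtain ⟨y, hy, hxy⟩ := mem_iUnion₂.1 (hcover hx)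
  exact ⟨y, hy, connectedComponentIn_eq hxy⟩

theorem finite_componentsIn_compl {Ω L : Set ℂ} (hΩ : IsOpen Ω) (hL : IsCompact L) (hLΩ : L ⊆ Ω)
    (hconv : OmegaConvex Ω L) : (componentsIn Lᶜ).Finite := by
  have hrank : 1 < Module.rank ℝ ℂ := Complex.rank_real_complex ▸ Nat.one_lt_ofNat
  obtain ⟨R, hR, hLR⟩ := hL.isBounded.subset_closedBall_lt 0 0
  have hbounded := finite_image_connectedComponentIn hL.isClosed.isOpen_compl
    ((isCompact_closedBall (0 : ℂ) R).inter_left hΩ.isClosed_compl)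
    (inter_subset_left.trans (compl_subset_compl.2 hLΩ))
  have hunbounded : {C ∈ componentsIn Lᶜ | ¬ IsBounded C}.Subsingleton := by
    rintro _ ⟨⟨x, -, rfl⟩, hx⟩ _ ⟨⟨y, -, rfl⟩, hy⟩
    exact connectedComponentIn_compl_eq_of_not_isBounded hrank hL.isBounded hx hy
  refine (hbounded.union hunbounded.finite).subset ?_
  rintro _ ⟨x, hx, rfl⟩
  refine (em (IsBounded (connectedComponentIn Lᶜ x))).imp (fun hb ↦ ?_)
    fun hb ↦ ⟨mem_image_of_mem _ hx, hb⟩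
  obtain ⟨p, hp, hpΩ⟩ := hconv _ ⟨⟨x, hx, rfl⟩, hb⟩
  exact ⟨p, ⟨hpΩ, connectedComponentIn_compl_subset_closedBall hrank hR.le hLR hb hp⟩,
    (connectedComponentIn_eq hp).symm⟩

end FiniteComponents

section Core

variable {Ω L : Set ℂ} {ι : Type*} {E : ι → Set ℂ}

theorem exists_seq_disjoint_gap (hL : IsCompact L) (hLc : IsPreconnected L) (hLΩ : L ⊆ Ω)
    (hE : ∀ i, IsCompact (E i)) (hEc : ∀ i, IsPreconnected (E i)) (hEΩ : ∀ i, E i ⊆ Ω)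
    (hescape : ∀ M ⊆ Ω, IsCompact M → ∃ i, Disjoint (E i) M ∧ OmegaConvex Ω (E i))
    (hgap : ∀ i, Disjoint L (E i) → OmegaConvex Ω (E i) →
      IsBounded (gap L (E i)) ∧ gap L (E i) ⊆ Ω) :
    ∃ f : ℕ → ι, (∀ n, Disjoint L (E (f n)) ∧ OmegaConvex Ω (E (f n))) ∧
      ∀ m n, m < n → Disjoint (E (f m)) (E (f n)) ∧ Disjoint (gap L (E (f m))) (E (f n)) := by
  refine exists_seq_of_forall_finset_exists
    (fun i ↦ Disjoint L (E i) ∧ OmegaConvex Ω (E i))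
    (fun i j ↦ Disjoint (E i) (E j) ∧ Disjoint (gap L (E i)) (E j)) fun s hs ↦ ?_
  have hclosure (i : ι) (hi : i ∈ s) : closure (gap L (E i)) ⊆ Ω :=
    (closure_gap_subset hL.isClosed (hE i).isClosed hLc (hEc i) (hs i hi).1).trans
      (union_subset (hgap i (hs i hi).1 (hs i hi).2).2 (union_subset hLΩ (hEΩ i)))
  obtain ⟨j, hj, hconv⟩ := hescape (L ∪ ⋃ i ∈ s, (E i ∪ closure (gap L (E i))))
    (union_subset hLΩ (iUnion₂_subset fun i hi ↦ union_subset (hEΩ i) (hclosure i hi)))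
    (hL.union (s.isCompact_biUnion fun i hi ↦
      (hE i).union (hgap i (hs i hi).1 (hs i hi).2).1.isCompact_closure))
  rw [disjoint_union_right, disjoint_iUnion₂_right] at hj
  refine ⟨j, ⟨hj.1.symm, hconv⟩, fun i hi ↦ ?_⟩
  obtain ⟨hdisj, hdisj_gap⟩ := disjoint_union_right.1 (hj.2 i hi)
  exact ⟨hdisj.symm, hdisj_gap.symm.mono_left subset_closure⟩

theorem exists_omegaConvex_union (hΩ : IsOpen Ω) (hL : IsCompact L) (hLc : IsConnected L)
    (hLΩ : L ⊆ Ω) (hLconv : OmegaConvex Ω L) (hE : ∀ i, IsCompact (E i))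
    (hEc : ∀ i, IsConnected (E i)) (hEΩ : ∀ i, E i ⊆ Ω)
    (hcard : ∀ i, (componentsIn (E i)ᶜ).encard ≠ 2)
    (hescape : ∀ M ⊆ Ω, IsCompact M → ∃ i, Disjoint (E i) M ∧ OmegaConvex Ω (E i)) :
    ∃ i, Disjoint L (E i) ∧ OmegaConvex Ω (L ∪ E i) := by
  by_contra! hno
  have hgap (i : ι) (hdisj : Disjoint L (E i)) (hconv : OmegaConvex Ω (E i)) :
      IsBounded (gap L (E i)) ∧ gap L (E i) ⊆ Ω := by
    by_contra! hgap
    exact hno i hdisj (omegaConvex_union hL.isClosed (hE i).isClosed hLc (hEc i) hdisj hLconv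
      hconv hgap)
  obtain ⟨f, hf, hdisj⟩ := exists_seq_disjoint_gap hL hLc.isPreconnected hLΩ hE
    (fun i ↦ (hEc i).isPreconnected) hEΩ hescape hgap
  choose e he using fun i ↦ (hEc i).nonempty
  obtain ⟨m, n, hmn, hsame⟩ :=
    (finite_componentsIn_compl hΩ hL hLΩ hLconv).exists_lt_map_eq_of_forall_mem
      (f := fun n ↦ connectedComponentIn Lᶜ (e (f n)))
      fun n ↦ mem_image_of_mem _ (disjoint_right.1 (hf n).1 (he _))
  obtain ⟨hbdd, hsub⟩ := hgap (f n) (hf n).1 (hf n).2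
  obtain ⟨hbdd', hsub'⟩ := hgap (f m) (hf m).1 (hf m).2
  exact not_gap_subset_of_two_lt_encard (hE _).isClosed (hEc _) hLc (hEc _) (hf m).1 (hf n).1
    (hdisj m n hmn).1 (hf m).2
    (two_lt_encard_componentsIn_compl_of_gap_subset (hE _).isBounded (hEc _).nonempty
      hLc.nonempty (hf m).1 hLconv (hEΩ _) (hcard _) hbdd' hsub')
    (he _) (he _) hsame (hdisj m n hmn).2 hbdd hsub

end Core

section UniformlyInjective

theorem encard_componentsIn_compl_image_of_injOn {U K : Set ℂ} {f : ℂ → ℂ} (hU : IsOpen U)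
    (hf : DifferentiableOn ℂ f U) (hinj : InjOn f U) (hK : IsCompact K) (hKc : IsConnected K)
    (hKU : K ⊆ U) : (componentsIn (f '' K)ᶜ).encard = (componentsIn Kᶜ).encard := by
  obtain ⟨x₀, hx₀⟩ := hKc.nonempty
  have hsub := connectedComponentIn_subset U x₀
  obtain ⟨e, he, rfl⟩ := exists_openPartialHomeomorph_of_injOn hU.connectedComponentIn
    (hf.mono hsub) (hinj.mono hsub)
  exact encard_componentsIn_compl_image (he ▸ isPreconnected_connectedComponentIn) hK hKc.nonempty
    (he ▸ hKc.isPreconnected.subset_connectedComponentIn hx₀ hKU)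

theorem exists_injOn_omegaConvex_union {G Ω K L : Set ℂ} (hG : IsOpen G) (hGc : IsConnected G)
    (hΩ : IsOpen Ω) (hΩc : IsConnected Ω)
    (hGtop : HasNoHole G ∨ ∃ C₁ C₂ : Set ℂ, IsHole G C₁ ∧ IsHole G C₂ ∧ C₁ ≠ C₂)
    {φ : ℕ → ℂ → ℂ} (hφ : ∀ n, DifferentiableOn ℂ (φ n) G) (hφΩ : ∀ n, MapsTo (φ n) G Ω)
    (hinj : EventuallyInjective G φ)
    (hescape : ∀ K ⊆ G, IsCompact K → OmegaConvex G K → ∀ L ⊆ Ω, IsCompact L →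
      ∀ N, ∃ n ≥ N, φ n '' K ∩ L = ∅ ∧ OmegaConvex Ω (φ n '' K))
    (hK : IsCompact K) (hKG : K ⊆ G) (hL : IsCompact L) (hLΩ : L ⊆ Ω) :
    ∃ n K' L' U, IsCompact K' ∧ IsCompact L' ∧ K ⊆ K' ∧ L ⊆ L' ∧ K' ⊆ U ∧ U ⊆ G ∧ L' ⊆ Ω ∧
      IsOpen U ∧ InjOn (φ n) U ∧ Disjoint L' (φ n '' K') ∧ OmegaConvex Ω (L' ∪ φ n '' K') := by
  obtain ⟨L', hL', hL'c, hL'Ω, hLL', hL'conv⟩ :=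
    exists_isCompact_isConnected_omegaConvex_superset hΩ hΩc hL hLΩ
  obtain ⟨K', hK', hK'c, hK'G, hKK', hK'conv, hcard⟩ :=
    exists_isCompact_omegaConvex_encard_ne_two hG hGc hGtop hK hKG
  obtain ⟨N, hN⟩ := hinj K' hK'G hK'
  have hcont (n : ℕ) : ContinuousOn (φ n) K' := (hφ n).continuousOn.mono hK'G
  have hcard_image (n : ℕ) : (componentsIn (φ (N + n) '' K')ᶜ).encard ≠ 2 := by
    obtain ⟨U, hU, hKU, hUG, hinjU⟩ := hN (N + n) (Nat.le_add_right N n)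
    rwa [encard_componentsIn_compl_image_of_injOn hU ((hφ _).mono hUG) hinjU hK' hK'c hKU]
  obtain ⟨n, hdisj, hconv⟩ := exists_omegaConvex_union (E := fun n ↦ φ (N + n) '' K') hΩ hL' hL'c
    hL'Ω hL'conv (fun n ↦ hK'.image_of_continuousOn (hcont _)) (fun n ↦ hK'c.image _ (hcont _))
    (fun n ↦ ((hφΩ _).mono_left hK'G).image_subset) hcard_image fun M hMΩ hM ↦ by
      obtain ⟨n, hn, hdisj, hconv⟩ := hescape K' hK'G hK' hK'conv M hMΩ hM N
      obtain ⟨m, rfl⟩ := Nat.exists_eq_add_of_le hn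
      exact ⟨m, disjoint_iff_inter_eq_empty.2 hdisj, hconv⟩
  obtain ⟨U, hU, hKU, hUG, hinjU⟩ := hN (N + n) (Nat.le_add_right N n)
  exact ⟨N + n, K', L', U, hK', hL', hKK', hLL', hKU, hUG, hL'Ω, hU, hinjU, hdisj, hconv⟩

end UniformlyInjective

section CauchyPompeiu

open Complex MeasureTheory
open scoped Real ComplexConjugate

variable {E : Type*} [NormedAddCommGroup E] [NormedSpace ℂ E] {u : ℂ → E}

/-- The Cauchy–Riemann operator `∂u/∂x + i ∂u/∂y`, twice the usual `∂u/∂z̄`. -/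
noncomputable def dbar (u : ℂ → E) (z : ℂ) : E :=
  fderiv ℝ u z 1 + I • fderiv ℝ u z I

theorem dbar_eq_zero {z : ℂ} (hu : DifferentiableAt ℂ u z) : dbar u z = 0 := by
  rw [dbar, (differentiableAt_complex_iff_differentiableAt_real.1 hu).2, smul_smul, I_mul_I,
    neg_one_smul, add_neg_cancel]

theorem continuous_dbar (hu : ContDiff ℝ 1 u) : Continuous (dbar u) := by
  have hfderiv : Continuous (fderiv ℝ u) := hu.continuous_fderiv one_ne_zero
  exact (hfderiv.clm_apply continuous_const).add
    ((hfderiv.clm_apply continuous_const).const_smul I)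

theorem hasCompactSupport_dbar (hu : HasCompactSupport u) : HasCompactSupport (dbar u) :=
  (hu.fderiv ℝ).comp_left (g := fun D : ℂ →L[ℝ] E ↦ D 1 + I • D I) (by simp)

theorem conj_smul_apply_one_add_I_smul (D : ℂ →L[ℝ] E) (e : ℂ) :
    conj e • (D 1 + I • D I) = D e + I • D (e * I) := by
  have hD (w : ℂ) : D w = (w.re : ℂ) • D 1 + (w.im : ℂ) • D I := by
    conv_lhs => rw [← re_add_im w, ← mul_one (w.re : ℂ), ← real_smul, ← real_smul]
    rw [map_add, map_smul, map_smul, coe_smul, coe_smul]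
  have hconj : conj e = e.re - e.im * I := by
    simp [Complex.ext_iff]
  rw [hD e, hD (e * I), hconj]
  simp only [mul_I_re, mul_I_im, ofReal_neg]
  match_scalars
  · ring
  · linear_combination -e.im * I_mul_I

theorem integral_fderiv_circleMap_exp [CompleteSpace E] (hu : ContDiff ℝ 1 u)
    (hc : HasCompactSupport u) (θ : ℝ) :
    ∫ r in Ioi (0 : ℝ), fderiv ℝ u (circleMap 0 r θ) (exp (θ * I)) = -u 0 := by
  have hsupp : HasCompactSupport fun r : ℝ ↦ u (r • exp (θ * I)) :=
    hc.comp_isClosedEmbedding (isClosedEmbedding_smul_left (exp_ne_zero _))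
  have hderiv (r : ℝ) : HasDerivAt (fun r : ℝ ↦ u (r • exp (θ * I)))
      (fderiv ℝ u (circleMap 0 r θ) (exp (θ * I))) r := by
    have hray := (hasDerivAt_id r).smul_const (exp (θ * I))
    simpa [circleMap, Function.comp_def] using
      ((hu.differentiable one_ne_zero _).hasFDerivAt.comp_hasDerivAt r hray)
  have hftc := hsupp.integral_Ioi_deriv_eq (by fun_prop) 0
  simpa only [(hderiv _).deriv, zero_smul] using hftc

theorem integral_fderiv_circleMap_exp_mul_I [CompleteSpace E] (hu : ContDiff ℝ 1 u) {r : ℝ}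
    (hr : r ≠ 0) : ∫ θ in Ioo (-π) π, fderiv ℝ u (circleMap 0 r θ) (exp (θ * I) * I) = 0 := by
  have hderiv (θ : ℝ) : HasDerivAt (fun θ ↦ r⁻¹ • u (circleMap 0 r θ))
      (fderiv ℝ u (circleMap 0 r θ) (exp (θ * I) * I)) θ := by
    have hcircle := (hu.differentiable one_ne_zero _).hasFDerivAt.comp_hasDerivAt θ
      (hasDerivAt_circleMap 0 r θ)
    convert hcircle.const_smul r⁻¹ using 1
    · rfl
    simp [circleMap, mul_assoc, ← map_smul, hr]
  have hcont : Continuous fun θ ↦ fderiv ℝ u (circleMap 0 r θ) (exp (θ * I) * I) :=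
    ((hu.continuous_fderiv one_ne_zero).comp (continuous_circleMap 0 r)).clm_apply (by fun_prop)
  rw [← integral_Ioc_eq_integral_Ioo, ← intervalIntegral.integral_of_le (by linarith [Real.pi_pos]),
    intervalIntegral.integral_eq_sub_of_hasDerivAt (fun θ _ ↦ hderiv θ)
      (hcont.intervalIntegrable _ _)]
  simp [circleMap]

theorem integrableOn_fderiv_circleMap (hu : ContDiff ℝ 1 u) (hc : HasCompactSupport u) {e : ℝ → ℂ}
    (he : Continuous e) :
    IntegrableOn (fun p : ℝ × ℝ ↦ fderiv ℝ u (circleMap 0 p.1 p.2) (e p.2))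
      (Ioi (0 : ℝ) ×ˢ Ioo (-π) π) := by
  obtain ⟨R, hR⟩ := (hc.fderiv ℝ).isCompact.isBounded.subset_closedBall 0
  have hcont : Continuous fun p : ℝ × ℝ ↦ fderiv ℝ u (circleMap 0 p.1 p.2) (e p.2) :=
    ((hu.continuous_fderiv one_ne_zero).comp (by unfold circleMap; fun_prop)).clm_apply
      (by fun_prop)
  refine (hcont.continuousOn.integrableOn_compact
    (isCompact_Icc (a := ((0 : ℝ), -π)) (b := (R, π)))).of_forall_sdiff_eq_zero
    (measurableSet_Ioi.prod measurableSet_Ioo) ?_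
  rintro ⟨r, θ⟩ ⟨⟨hr, hθ⟩, hp⟩
  have hnotMem : circleMap 0 r θ ∉ tsupport (fderiv ℝ u) := fun h ↦ by
    have hrR := mem_closedBall_zero_iff.1 (hR h)
    rw [norm_circleMap_zero, abs_of_pos hr] at hrR
    exact hp ⟨⟨le_of_lt hr, hθ.1.le⟩, hrR, hθ.2.le⟩
  simp [image_eq_zero_of_notMem_tsupport hnotMem]

theorem setIntegral_fderiv_circleMap_exp [CompleteSpace E] (hu : ContDiff ℝ 1 u)
    (hc : HasCompactSupport u) :
    ∫ p in Ioi (0 : ℝ) ×ˢ Ioo (-π) π, fderiv ℝ u (circleMap 0 p.1 p.2) (exp (p.2 * I)) =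
      -(2 * π) • u 0 := by
  have hint := integrableOn_fderiv_circleMap hu hc (e := fun θ ↦ exp (θ * I)) (by fun_prop)
  rw [Measure.volume_eq_prod, ← setIntegral_prod_swap]
  refine (setIntegral_prod _ hint.swap).trans ?_
  simp only [Function.comp_apply, Prod.swap_prod_mk, integral_fderiv_circleMap_exp hu hc]
  rw [setIntegral_const, Real.volume_real_Ioo_of_le (by linarith [Real.pi_pos])]
  module

theorem setIntegral_fderiv_circleMap_exp_mul_I [CompleteSpace E] (hu : ContDiff ℝ 1 u)
    (hc : HasCompactSupport u) :
    ∫ p in Ioi (0 : ℝ) ×ˢ Ioo (-π) π, fderiv ℝ u (circleMap 0 p.1 p.2) (exp (p.2 * I) * I) = 0 := by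
  rw [Measure.volume_eq_prod, setIntegral_prod _
    (integrableOn_fderiv_circleMap hu hc (e := fun θ ↦ exp (θ * I) * I) (by fun_prop))]
  exact setIntegral_eq_zero_of_forall_eq_zero fun r hr ↦
    integral_fderiv_circleMap_exp_mul_I hu (ne_of_gt hr)

theorem smul_inv_circleMap_smul_dbar (u : ℂ → E) {r : ℝ} (hr : r ≠ 0) (θ : ℝ) :
    r • (circleMap 0 r θ)⁻¹ • dbar u (circleMap 0 r θ) =
      fderiv ℝ u (circleMap 0 r θ) (exp (θ * I)) +
        I • fderiv ℝ u (circleMap 0 r θ) (exp (θ * I) * I) := by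
  have hconj : (r : ℂ) * (circleMap 0 r θ)⁻¹ = conj (exp (θ * I)) := by
    rw [circleMap, zero_add, mul_inv, mul_inv_cancel_left₀ (ofReal_ne_zero.2 hr), ← exp_neg,
      ← exp_conj, map_mul, conj_ofReal, conj_I, mul_neg]
  rw [← coe_smul, smul_smul, hconj, dbar, conj_smul_apply_one_add_I_smul]

theorem integral_inv_smul_dbar [CompleteSpace E] (hu : ContDiff ℝ 1 u) (hc : HasCompactSupport u) :
    ∫ ζ, ζ⁻¹ • dbar u ζ = -(2 * π) • u 0 := by
  have hsymm (p : ℝ × ℝ) : Complex.polarCoord.symm p = circleMap 0 p.1 p.2 := by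
    simp [circleMap, exp_mul_I]
  calc
    _ = ∫ p in Ioi (0 : ℝ) ×ˢ Ioo (-π) π,
          p.1 • (circleMap 0 p.1 p.2)⁻¹ • dbar u (circleMap 0 p.1 p.2) := by
      simp only [← Complex.integral_comp_polarCoord_symm, polarCoord_target, hsymm]
    _ = ∫ p in Ioi (0 : ℝ) ×ˢ Ioo (-π) π, (fderiv ℝ u (circleMap 0 p.1 p.2) (exp (p.2 * I)) +
          I • fderiv ℝ u (circleMap 0 p.1 p.2) (exp (p.2 * I) * I)) :=
      setIntegral_congr_fun (measurableSet_Ioi.prod measurableSet_Ioo) fun p hp ↦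
        smul_inv_circleMap_smul_dbar u (ne_of_gt hp.1) p.2
    _ = -(2 * π) • u 0 := by
      have hradial : Continuous fun θ : ℝ ↦ exp (θ * I) := by fun_prop
      have hangular : Continuous fun θ : ℝ ↦ exp (θ * I) * I := by fun_prop
      refine (integral_add (integrableOn_fderiv_circleMap hu hc hradial)
        ((integrableOn_fderiv_circleMap hu hc hangular).smul I)).trans ?_
      simp only [Pi.smul_apply]
      rw [integral_smul, setIntegral_fderiv_circleMap_exp hu hc,
        setIntegral_fderiv_circleMap_exp_mul_I hu hc, smul_zero, add_zero]

theorem integral_sub_inv_smul_dbar [CompleteSpace E] (hu : ContDiff ℝ 1 u)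
    (hc : HasCompactSupport u) (z : ℂ) :
    ∫ ζ, (ζ - z)⁻¹ • dbar u ζ = -(2 * π) • u z := by
  rw [← integral_add_right_eq_self _ z]
  have htranslate := integral_inv_smul_dbar (u := fun ζ ↦ u (ζ + z)) (by fun_prop)
    (hc.comp_homeomorph (Homeomorph.addRight z))
  simpa only [dbar, fderiv_comp_add_right, zero_add, add_sub_cancel_right] using htranslate

end CauchyPompeiu

section Runge

open MeasureTheory Topology
open scoped Real Manifold ContDiff

theorem exists_contDiff_hasCompactSupport_eventuallyEq {E F : Type*} [NormedAddCommGroup E]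
    [NormedSpace ℝ E] [FiniteDimensional ℝ E] [NormedAddCommGroup F] [NormedSpace ℝ F] {n : ℕ∞}
    {K V : Set E} (hK : IsCompact K) (hV : IsOpen V) (hKV : K ⊆ V) {h : E → F}
    (hh : ContDiffOn ℝ n h V) :
    ∃ u : E → F, ContDiff ℝ n u ∧ HasCompactSupport u ∧ u =ᶠ[𝓝ˢ K] h := by
  obtain ⟨L, hL, hKL, hLV⟩ := exists_compact_between hK hV hKV
  obtain ⟨χ, hχ_one, hχ_zero, -⟩ :=
    exists_contMDiffMap_one_nhds_of_subset_interior (n := n) 𝓘(ℝ, E) hK.isClosed hKL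
  have hsupport (z : E) (hz : z ∉ L) : χ z • h z = 0 := by rw [hχ_zero z hz, zero_smul]
  refine ⟨fun z ↦ χ z • h z, contDiff_iff_contDiffAt.2 fun z ↦ ?_,
    HasCompactSupport.intro hL hsupport, ?_⟩
  · by_cases hz : z ∈ L
    · exact χ.contMDiff.contDiff.contDiffAt.smul (hh.contDiffAt (hV.mem_nhds (hLV hz)))
    · refine contDiffAt_const (c := 0) |>.congr_of_eventuallyEq ?_
      filter_upwards [hL.isClosed.isOpen_compl.mem_nhds hz] using hsupport
  · filter_upwards [hχ_one] with z hz
    rw [hz, one_smul]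

theorem exists_contDiff_hasCompactSupport_eq_of_differentiableOn {E : Type*}
    [NormedAddCommGroup E] [NormedSpace ℂ E] [CompleteSpace E] {K V : Set ℂ} (hK : IsCompact K)
    (hV : IsOpen V) (hKV : K ⊆ V) {h : ℂ → E} (hh : DifferentiableOn ℂ h V) :
    ∃ u : ℂ → E, ContDiff ℝ 1 u ∧ HasCompactSupport u ∧ EqOn u h K ∧ dbar u =ᶠ[𝓝ˢ K] 0 := by
  obtain ⟨u, hu, hcompact, huh⟩ := exists_contDiff_hasCompactSupport_eventuallyEq (n := 1) hK hV hKV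
    ((hh.contDiffOn hV).restrict_scalars ℝ)
  refine ⟨u, hu, hcompact, huh.self_of_nhdsSet, ?_⟩
  refine eventually_nhdsSet_iff_forall.2 fun z hz ↦ ?_
  filter_upwards [(eventually_nhdsSet_iff_forall.1 huh z hz).eventually_nhds,
    hV.mem_nhds (hKV hz)] with w huw hw
  exact dbar_eq_zero ((hh.differentiableAt (hV.mem_nhds hw)).congr_of_eventuallyEq huw)

theorem continuous_sub_inv_smul {E : Type*} [NormedAddCommGroup E] [NormedSpace ℂ E] {K : Set ℂ}
    {v : ℂ → E} (hv : Continuous v) (hvK : v =ᶠ[𝓝ˢ K] 0) :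
    Continuous fun p : ℂ × K ↦ (p.1 - p.2)⁻¹ • v p.1 := by
  refine continuous_iff_continuousAt.2 fun ⟨w, z⟩ ↦ ?_
  rcases eq_or_ne w z with rfl | hwz
  · refine continuousAt_const (y := 0) |>.congr ?_
    filter_upwards [continuousAt_fst.eventually (eventually_nhdsSet_iff_forall.1 hvK z z.2)]
      with p hp
    rw [hp, Pi.zero_apply, smul_zero]
  · exact ContinuousAt.smul (ContinuousAt.inv₀ (by fun_prop) (sub_ne_zero.2 hwz)) (by fun_prop)

/-- The algebra of restrictions to `K` of functions holomorphic on `Ω`; in particular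
`holomorphicRestrict Ω Ω` is `H(Ω)`. The function on `Ω` is represented by a total function, whose
values outside `Ω` are irrelevant. -/
def holomorphicRestrict (Ω K : Set ℂ) : Subalgebra ℂ C(K, ℂ) where
  carrier := {F | ∃ f : ℂ → ℂ, DifferentiableOn ℂ f Ω ∧ ∀ z : K, F z = f z}
  mul_mem' := fun ⟨f, hf, hFf⟩ ⟨g, hg, hFg⟩ ↦ ⟨f * g, hf.mul hg, fun z ↦ by simp [hFf, hFg]⟩
  add_mem' := fun ⟨f, hf, hFf⟩ ⟨g, hg, hFg⟩ ↦ ⟨f + g, hf.add hg, fun z ↦ by simp [hFf, hFg]⟩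
  algebraMap_mem' c := ⟨fun _ ↦ c, differentiableOn_const c, fun _ ↦ rfl⟩

variable {Ω K : Set ℂ}

theorem isUnit_algebraMap_sub_restrict_id {A : Subalgebra ℂ C(K, ℂ)}
    (hA : holomorphicRestrict Ω K ≤ A) (hKΩ : K ⊆ Ω) {x : A}
    (hx : (x : C(K, ℂ)) = (ContinuousMap.id ℂ).restrict K) {p : ℂ} (hp : p ∉ Ω) :
    IsUnit (algebraMap ℂ A p - x) := by
  have hne (z : ℂ) (hz : z ∈ Ω) : p - z ≠ 0 := sub_ne_zero.2 (ne_of_mem_of_not_mem hz hp).symm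
  let inverse : C(K, ℂ) :=
    ⟨fun z ↦ (p - z)⁻¹, Continuous.inv₀ (by fun_prop) fun z ↦ hne z (hKΩ z.2)⟩
  have hinverse : inverse ∈ A :=
    hA ⟨fun z ↦ (p - z)⁻¹, DifferentiableOn.inv (by fun_prop) hne, fun _ ↦ rfl⟩
  refine IsUnit.of_mul_eq_one ⟨inverse, hinverse⟩ (Subtype.ext (ContinuousMap.ext fun z ↦ ?_))
  simpa [inverse, hx] using mul_inv_cancel₀ (hne z (hKΩ z.2))

/- Passing from `C(K, ℂ)` to a closed subalgebra can only enlarge the spectrum of the coordinate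
function by filling in holes of `K`, and a hole containing a point outside `Ω` is not filled in
since its resolvent at that point is holomorphic on `Ω`. -/
theorem inv_sub_mem_topologicalClosure_holomorphicRestrict [CompactSpace K] (hKΩ : K ⊆ Ω)
    (hconv : OmegaConvex Ω K) {w : ℂ} (hw : w ∉ K) {F : C(K, ℂ)} (hF : ∀ z : K, F z = (w - z)⁻¹) :
    F ∈ (holomorphicRestrict Ω K).topologicalClosure := by
  set A := (holomorphicRestrict Ω K).topologicalClosure
  have hAclosed : IsClosed (A : Set C(K, ℂ)) := Subalgebra.isClosed_topologicalClosure _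
  have hle : holomorphicRestrict Ω K ≤ A := Subalgebra.le_topologicalClosure _
  let x : A := ⟨(ContinuousMap.id ℂ).restrict K, hle ⟨id, differentiableOn_id, fun _ ↦ rfl⟩⟩
  have hspectrum : spectrum ℂ (x : C(K, ℂ)) = K := by
    simp [x, ContinuousMap.spectrum_eq_range]
  have hunit : IsUnit (algebraMap ℂ A w - x) := by
    by_contra hwx
    have hbounded := Subalgebra.spectrum_isBounded_connectedComponentIn A x hwx
    have hfilled := Subalgebra.spectrum_sUnion_connectedComponentIn (𝕜 := ℂ) A x
    rw [hspectrum] at hbounded hfilled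
    obtain ⟨p, hp, hpΩ⟩ := hconv _ ⟨⟨w, hw, rfl⟩, hbounded⟩
    have hpx : p ∈ spectrum ℂ x := hfilled ▸ Or.inr (mem_biUnion (x := w) ⟨hwx, hw⟩ hp)
    exact hpx (isUnit_algebraMap_sub_restrict_id hle hKΩ rfl hpΩ)
  obtain ⟨y, hy, -⟩ := isUnit_iff_exists.1 hunit
  have hFy : F = y := ContinuousMap.ext fun z ↦ by
    have hyz : (w - z) * (y : C(K, ℂ)) z = 1 := DFunLike.congr_fun (congrArg Subtype.val hy) z
    rw [hF, eq_inv_of_mul_eq_one_right hyz]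
  exact hFy ▸ y.2

theorem inv_sub_smul_mem_topologicalClosure_holomorphicRestrict [CompactSpace K] (hKΩ : K ⊆ Ω)
    (hconv : OmegaConvex Ω K) {w c : ℂ} (hc : w ∈ K → c = 0) {F : C(K, ℂ)}
    (hF : ∀ z : K, F z = (w - z)⁻¹ • c) : F ∈ (holomorphicRestrict Ω K).topologicalClosure := by
  by_cases hw : w ∈ K
  · have hzero : F = 0 := ContinuousMap.ext fun z ↦ by
      rw [hF, hc hw, smul_zero, ContinuousMap.zero_apply]
    exact hzero ▸ zero_mem _
  · let resolvent : C(K, ℂ) := ⟨fun z ↦ (w - z)⁻¹, Continuous.inv₀ (by fun_prop) fun z ↦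
      sub_ne_zero.2 (ne_of_mem_of_not_mem z.2 hw).symm⟩
    have hsmul : F = c • resolvent := ContinuousMap.ext fun z ↦ by
      rw [hF, smul_eq_mul, mul_comm]
      rfl
    exact hsmul ▸ Subalgebra.smul_mem _
      (inv_sub_mem_topologicalClosure_holomorphicRestrict hKΩ hconv hw fun _ ↦ rfl) _

theorem integral_mem_of_isClosed {α E : Type*} [MeasurableSpace α] {μ : Measure α}
    [NormedAddCommGroup E] [NormedSpace ℝ E] [CompleteSpace E] {p : Submodule ℝ E}
    (hp : IsClosed (p : Set E)) {f : α → E} (hf : ∀ᵐ a ∂μ, f a ∈ p) : ∫ a, f a ∂μ ∈ p := by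
  by_cases hint : Integrable f μ
  · rw [← Submodule.Quotient.mk_eq_zero, ← Submodule.mkQ_apply, ← Submodule.mkQL_apply,
      ← ContinuousLinearMap.integral_comp_comm _ hint]
    refine integral_eq_zero_of_ae (hf.mono fun a ha ↦ ?_)
    simpa using ha
  · rw [integral_undef hint]
    exact p.zero_mem

/- Runge's theorem through the Cauchy–Pompeiu formula: on `K` a function holomorphic near `K` is an
average of the functions `(w - z)⁻¹` with `w ∉ K`. -/
theorem mem_topologicalClosure_holomorphicRestrict [CompactSpace K] (hKΩ : K ⊆ Ω)
    (hconv : OmegaConvex Ω K) {V : Set ℂ} (hV : IsOpen V) (hKV : K ⊆ V) {h : ℂ → ℂ}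
    (hh : DifferentiableOn ℂ h V) {F : C(K, ℂ)} (hF : ∀ z : K, F z = h z) :
    F ∈ (holomorphicRestrict Ω K).topologicalClosure := by
  set A := (holomorphicRestrict Ω K).topologicalClosure
  obtain ⟨u, hu, hcompact, huh, hdbar⟩ := exists_contDiff_hasCompactSupport_eq_of_differentiableOn
    (isCompact_iff_compactSpace.2 inferInstance) hV hKV hh
  let kernel : C(ℂ, C(K, ℂ)) :=
    ContinuousMap.curry ⟨_, continuous_sub_inv_smul (continuous_dbar hu) hdbar⟩
  have happly (w : ℂ) (z : K) : kernel w z = (w - z)⁻¹ • dbar u w := rfl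
  have hkernel : Integrable kernel :=
    kernel.continuous.integrable_of_hasCompactSupport <|
      (hasCompactSupport_dbar hcompact).mono fun w hw hzero ↦ hw <| ContinuousMap.ext fun z ↦ by
        rw [happly, hzero, smul_zero, ContinuousMap.zero_apply]
  have hmem (w : ℂ) : kernel w ∈ A :=
    inv_sub_smul_mem_topologicalClosure_holomorphicRestrict hKΩ hconv
      (fun hw ↦ hdbar.self_of_nhdsSet hw) (happly w)
  have hFkernel : F = (-(2 * π))⁻¹ • ∫ w, kernel w := by
    ext z
    simp only [ContinuousMap.smul_apply, ContinuousMap.integral_apply hkernel, happly]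
    rw [integral_sub_inv_smul_dbar hu hcompact, hF, huh z.2,
      inv_smul_smul₀ (neg_ne_zero.2 Real.two_pi_pos.ne')]
  have hintegral : ∫ w, kernel w ∈ A.toSubmodule.restrictScalars ℝ :=
    integral_mem_of_isClosed (Subalgebra.isClosed_topologicalClosure _) (.of_forall hmem)
  rw [hFkernel]
  exact Submodule.smul_mem _ _ hintegral

theorem exists_differentiableOn_norm_sub_lt (hK : IsCompact K) (hKΩ : K ⊆ Ω)
    (hconv : OmegaConvex Ω K) {V : Set ℂ} (hV : IsOpen V) (hKV : K ⊆ V) {h : ℂ → ℂ}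
    (hh : DifferentiableOn ℂ h V) {ε : ℝ} (hε : 0 < ε) :
    ∃ f : ℂ → ℂ, DifferentiableOn ℂ f Ω ∧ ∀ z ∈ K, ‖f z - h z‖ < ε := by
  have := isCompact_iff_compactSpace.1 hK
  let H : C(K, ℂ) := ⟨K.domRestrict h, (hh.continuousOn.mono hKV).domRestrict⟩
  obtain ⟨F, ⟨f, hf, hFf⟩, hHF⟩ := Metric.mem_closure_iff.1
    (mem_topologicalClosure_holomorphicRestrict hKΩ hconv hV hKV hh (F := H) fun _ ↦ rfl) ε hε
  refine ⟨f, hf, fun z hz ↦ ?_⟩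
  have hdist := (ContinuousMap.dist_lt_iff hε).1 hHF ⟨z, hz⟩
  rwa [hFf, dist_comm, dist_eq_norm] at hdist

open scoped Classical in
theorem exists_differentiableOn_norm_sub_lt_of_disjoint {A B : Set ℂ} (hA : IsCompact A)
    (hB : IsCompact B) (hAB : Disjoint A B) (hABΩ : A ∪ B ⊆ Ω) (hconv : OmegaConvex Ω (A ∪ B))
    {U V : Set ℂ} (hU : IsOpen U) (hV : IsOpen V) (hAU : A ⊆ U) (hBV : B ⊆ V) {f g : ℂ → ℂ}
    (hf : DifferentiableOn ℂ f U) (hg : DifferentiableOn ℂ g V) {ε : ℝ} (hε : 0 < ε) :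
    ∃ F : ℂ → ℂ, DifferentiableOn ℂ F Ω ∧ (∀ z ∈ A, ‖F z - f z‖ < ε) ∧
      ∀ z ∈ B, ‖F z - g z‖ < ε := by
  obtain ⟨U', V', hU', hV', hAU', hBV', hdisj⟩ := SeparatedNhds.of_isCompact_isCompact hA hB hAB
  have hgluef : EqOn (U'.piecewise f g) f U' := piecewise_eqOn _ _ _
  have hglueg : EqOn (U'.piecewise f g) g V' :=
    (piecewise_eqOn_compl _ _ _).mono hdisj.subset_compl_left
  have hglue : DifferentiableOn ℂ (U'.piecewise f g) (U ∩ U' ∪ V ∩ V') :=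
    ((hf.mono inter_subset_left).congr (hgluef.mono inter_subset_right)).union_of_isOpen
      ((hg.mono inter_subset_left).congr (hglueg.mono inter_subset_right))
      (hU.inter hU') (hV.inter hV')
  obtain ⟨F, hF, hFglue⟩ := exists_differentiableOn_norm_sub_lt (hA.union hB) hABΩ hconv
    ((hU.inter hU').union (hV.inter hV'))
    (union_subset_union (subset_inter hAU hAU') (subset_inter hBV hBV')) hglue hε
  refine ⟨F, hF, fun z hz ↦ ?_, fun z hz ↦ ?_⟩
  · rw [← hgluef (hAU' hz)]
    exact hFglue z (.inl hz)
  · rw [← hglueg (hBV' hz)]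
    exact hFglue z (.inr hz)

end Runge

section Necessity

variable {G Ω : Set ℂ} {φ : ℕ → ℂ → ℂ} {f g : ℂ → ℂ} {K L : Set ℂ}

theorem UniversalFor.exists_disjoint_image (hu : UniversalFor G φ f) (hf : ContinuousOn f Ω)
    (hg : DifferentiableOn ℂ g G) (hK : IsCompact K) (hKG : K ⊆ G) (hL : IsCompact L)
    (hLΩ : L ⊆ Ω) {ε : ℝ} (hε : 0 < ε) :
    ∃ n, ∃ M : ℂ, (∀ z ∈ K, ‖f (φ n z) - (g z + M)‖ < ε) ∧ Disjoint (φ n '' K) L := by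
  obtain ⟨a, ha⟩ := hK.exists_bound_of_continuousOn (hg.continuousOn.mono hKG)
  obtain ⟨b, hb⟩ := hL.exists_bound_of_continuousOn (hf.mono hLΩ)
  set M : ℂ := ↑(a + b + ε) with hM
  obtain ⟨n, hn⟩ := hu (fun z ↦ g z + M) (hg.add_const M) K hKG hK ε hε
  refine ⟨n, M, hn, disjoint_left.2 ?_⟩
  rintro _ ⟨z, hz, rfl⟩ hzL
  have hMle : a + b + ε ≤ ‖M‖ := by
    rw [hM, Complex.norm_real]
    exact Real.le_norm_self _
  have hMlt : ‖M‖ < a + b + ε := calc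
    ‖M‖ = ‖f (φ n z) - (f (φ n z) - (g z + M)) - g z‖ := by ring_nf
    _ ≤ ‖f (φ n z)‖ + ‖f (φ n z) - (g z + M)‖ + ‖g z‖ :=
      (norm_sub_le _ _).trans (by gcongr; exact norm_sub_le _ _)
    _ < a + b + ε := by linarith [ha z hz, hb _ hzL, hn z hz]
  exact hMlt.not_ge hMle

theorem UniversalFor.exists_ge_disjoint_image (hu : UniversalFor G φ f) (hf : ContinuousOn f Ω)
    (hφ : ∀ n, ContinuousOn (φ n) G) (hφΩ : ∀ n, MapsTo (φ n) G Ω)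
    (hg : DifferentiableOn ℂ g G) (hK : IsCompact K) (hne : K.Nonempty) (hKG : K ⊆ G)
    (hL : IsCompact L) (hLΩ : L ⊆ Ω) {ε : ℝ} (hε : 0 < ε) (N : ℕ) :
    ∃ n ≥ N, ∃ M : ℂ, (∀ z ∈ K, ‖f (φ n z) - (g z + M)‖ < ε) ∧ Disjoint (φ n '' K) L := by
  have hL' : IsCompact (L ∪ ⋃ j ∈ Iio N, φ j '' K) :=
    hL.union <| (finite_Iio N).isCompact_biUnion fun j _ ↦
      hK.image_of_continuousOn ((hφ j).mono hKG)
  have hLΩ' : L ∪ ⋃ j ∈ Iio N, φ j '' K ⊆ Ω :=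
    union_subset hLΩ (iUnion₂_subset fun j _ ↦ ((hφΩ j).mono_left hKG).image_subset)
  obtain ⟨n, M, hn, hdisj⟩ := hu.exists_disjoint_image hf hg hK hKG hL' hLΩ' hε
  refine ⟨n, not_lt.1 fun hnN ↦ ?_, M, hn, hdisj.mono_right subset_union_left⟩
  have himage : φ n '' K ⊆ ⋃ j ∈ Iio N, φ j '' K :=
    subset_biUnion_of_mem (u := fun j ↦ φ j '' K) (mem_Iio.2 hnN)
  obtain ⟨w, hw⟩ := hne.image (φ n)
  exact disjoint_left.1 hdisj hw (.inr (himage hw))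

theorem omegaConvex_empty : OmegaConvex Ω ∅ := by
  rintro _ ⟨⟨z, -, rfl⟩, hb⟩
  rw [compl_empty, isPreconnected_univ.connectedComponentIn (mem_univ z)] at hb
  exact absurd hb (NormedSpace.unbounded_univ ℂ ℂ)

theorem OmegaConvex.union_finite (hconv : OmegaConvex G K) (hK : IsClosed K) {T : Set ℂ}
    (hT : T.Finite) (hTG : T ⊆ G) (hKT : Disjoint K T) : OmegaConvex G (K ∪ T) := by
  rintro _ ⟨⟨z, hz, rfl⟩, hb⟩
  rw [compl_union] at hz
  have hTc : IsPreconnected Tᶜ := (hT.countable.isConnected_compl_of_one_lt_rank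
    (Complex.rank_real_complex ▸ Nat.one_lt_ofNat)).isPreconnected
  rw [connectedComponentIn_compl_union hK hT.isClosed hKT, hTc.connectedComponentIn hz.2] at hb ⊢
  have hb' : IsBounded (connectedComponentIn Kᶜ z) :=
    (hb.union hT.isBounded).subset fun x hx ↦ (em (x ∈ T)).symm.imp (⟨hx, ·⟩) id
  obtain ⟨p, hp, hpG⟩ := hconv _ ⟨⟨z, hz.1, rfl⟩, hb'⟩
  exact ⟨p, ⟨hp, fun hpT ↦ hpG (hTG hpT)⟩, hpG⟩

theorem exists_finite_forall_mem_connectedComponentIn_compl (hG : IsOpen G) (hK : IsCompact K)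
    (hne : K.Nonempty) (hKG : K ⊆ G) (hconv : OmegaConvex G K) :
    ∃ T ⊆ G \ K, T.Finite ∧ ∀ x ∉ K, ∃ t ∈ T, t ∈ connectedComponentIn Kᶜ x := by
  obtain ⟨T, hTG, hbij⟩ := exists_subset_bijOn (G \ K) (connectedComponentIn Kᶜ)
  rw [← componentsIn_compl_eq_image hK.isClosed hne hG hKG] at hbij
  refine ⟨T, hTG, hbij.finite_iff_finite.2 (finite_componentsIn_compl hG hK hKG hconv),
    fun x hx ↦ ?_⟩
  obtain ⟨t, ht, htx⟩ := hbij.surjOn (mem_image_of_mem _ hx)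
  exact ⟨t, ht, htx ▸ mem_connectedComponentIn (hTG ht).2⟩

theorem exists_finite_differentiableOn_separating (hG : IsOpen G) (hK : IsCompact K)
    (hne : K.Nonempty) (hKG : K ⊆ G) (hconv : OmegaConvex G K) {ε : ℝ} (hε : 0 < ε) :
    ∃ T ⊆ G, T.Finite ∧ (∀ x ∉ K, ∃ t ∈ T, t ∈ connectedComponentIn Kᶜ x) ∧
      ∃ g : ℂ → ℂ, DifferentiableOn ℂ g G ∧ (∀ z ∈ K, ‖g z‖ < ε) ∧ ∀ t ∈ T, ‖g t - 1‖ < ε := by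
  obtain ⟨T, hTGK, hT, hmeets⟩ :=
    exists_finite_forall_mem_connectedComponentIn_compl hG hK hne hKG hconv
  obtain ⟨hTG, hTK⟩ := subset_sdiff.1 hTGK
  obtain ⟨g, hg, hgK, hgT⟩ := exists_differentiableOn_norm_sub_lt_of_disjoint hK hT.isCompact
    hTK.symm (union_subset hKG hTG) (hconv.union_finite hK.isClosed hT hTG hTK.symm)
    isOpen_univ isOpen_univ (subset_univ K) (subset_univ T) (differentiableOn_const 0)
    (differentiableOn_const 1) hε
  simp only [sub_zero] at hgK
  exact ⟨T, hTG, hT, hmeets, g, hg, hgK, hgT⟩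

theorem exists_map_mem_connectedComponentIn_compl_image {U : Set ℂ} (hU : IsOpen U) {φ : ℂ → ℂ}
    (hφ : DifferentiableOn ℂ φ U) (hinj : InjOn φ U) {K' T : Set ℂ} (hK' : IsPreconnected K')
    (hKU : K' ⊆ U) (hK : IsCompact K) (hne : K.Nonempty) (hKK' : K ⊆ K') (hTK' : T ⊆ K')
    (hT : ∀ x ∉ K, ∃ t ∈ T, t ∈ connectedComponentIn Kᶜ x) {z : ℂ} (hz : z ∉ φ '' K) :
    ∃ t ∈ T, φ t ∈ connectedComponentIn (φ '' K)ᶜ z := by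
  obtain ⟨x₀, hx₀⟩ := hne
  have hsub : connectedComponentIn U x₀ ⊆ U := connectedComponentIn_subset U x₀
  obtain ⟨e, he, rfl⟩ := exists_openPartialHomeomorph_of_injOn hU.connectedComponentIn
    (hφ.mono hsub) (hinj.mono hsub)
  have hK'e : K' ⊆ e.source := he ▸ hK'.subset_connectedComponentIn (hKK' hx₀) hKU
  have hKe : K ⊆ e.source := hKK'.trans hK'e
  have hclosed : IsClosed (e '' K) := (hK.image_of_continuousOn (e.continuousOn.mono hKe)).isClosed
  obtain ⟨y, hy, hye⟩ := connectedComponentIn_compl_inter_nonempty hclosed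
    ⟨e x₀, mem_image_of_mem e hx₀⟩ e.open_target
    (image_subset_iff.2 fun x hx ↦ e.map_source (hKe hx)) hz
  obtain ⟨x, hx, rfl⟩ := e.image_source_eq_target.ge hye
  have hxK : x ∉ K := fun h ↦ connectedComponentIn_subset _ _ hy (mem_image_of_mem e h)
  obtain ⟨t, ht, htx⟩ := hT x hxK
  refine ⟨t, ht, ?_⟩
  rw [connectedComponentIn_eq hy]
  exact map_mem_connectedComponentIn_compl_image (he ▸ isPreconnected_connectedComponentIn)
    hK.isClosed hKe hx (hK'e (hTK' ht)) htx

theorem omegaConvex_of_forall_exists_lt_norm {E : Set ℂ} (hE : IsClosed E) (hEΩ : E ⊆ Ω)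
    {F : Type*} [NormedAddCommGroup F] [NormedSpace ℂ F] {f : ℂ → F}
    (hf : DifferentiableOn ℂ f Ω) {r : ℝ} (hr : ∀ z ∈ E, ‖f z‖ ≤ r)
    (hlt : ∀ z ∉ E, ∃ w ∈ connectedComponentIn Eᶜ z, r < ‖f w‖) : OmegaConvex Ω E := by
  rintro _ ⟨⟨z, hz, rfl⟩, hb⟩
  by_contra hempty
  have hCΩ : connectedComponentIn Eᶜ z ⊆ Ω := fun w hw ↦ not_not.1 fun hwΩ ↦ hempty ⟨w, hw, hwΩ⟩
  have hclosure : closure (connectedComponentIn Eᶜ z) ⊆ Ω :=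
    (closure_connectedComponentIn_compl_subset hE z).trans (union_subset hCΩ hEΩ)
  obtain ⟨w, hw, hrw⟩ := hlt z hz
  have hmax := Complex.norm_le_of_forall_mem_frontier_norm_le hb
    ⟨hf.mono hCΩ, hf.continuousOn.mono hclosure⟩
    (fun y hy ↦ hr y (frontier_connectedComponentIn_compl_subset hE z hy)) (subset_closure hw)
  exact hrw.not_ge hmax

/- Choose `g ≈ 0` on `K` and `g ≈ 1` at one point `t ∈ G` of each component of `Kᶜ`. If
`f ∘ φ n ≈ g + M` and `φ n '' K` had a hole contained in `Ω`, then `f - M` would violate the maximum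
principle there, since the hole contains some `φ n t`. -/
theorem UniversalFor.exists_ge_image_omegaConvex (hG : IsOpen G) (hGc : IsConnected G)
    (hφ : ∀ n, DifferentiableOn ℂ (φ n) G) (hφΩ : ∀ n, MapsTo (φ n) G Ω)
    (hinj : EventuallyInjective G φ) (hf : DifferentiableOn ℂ f Ω) (hu : UniversalFor G φ f)
    (hK : IsCompact K) (hKG : K ⊆ G) (hconv : OmegaConvex G K) (hL : IsCompact L) (hLΩ : L ⊆ Ω)
    (N : ℕ) : ∃ n ≥ N, Disjoint (φ n '' K) L ∧ OmegaConvex Ω (φ n '' K) := by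
  obtain rfl | hne := K.eq_empty_or_nonempty
  · simp only [image_empty]
    exact ⟨N, le_rfl, empty_disjoint L, omegaConvex_empty⟩
  obtain ⟨T, hTG, hT, hmeets, g, hg, hgK, hgT⟩ :=
    exists_finite_differentiableOn_separating hG hK hne hKG hconv (ε := 1 / 4) (by norm_num)
  obtain ⟨K', hK', hK'c, hK'G, hsub⟩ := exists_isCompact_isConnected_superset hG hGc
    (hK.union hT.isCompact) (union_subset hKG hTG)
  obtain ⟨hKK', hTK'⟩ := union_subset_iff.1 hsub
  obtain ⟨N', hN'⟩ := hinj K' hK'G hK'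
  obtain ⟨n, hn, M, happrox, hdisj⟩ := hu.exists_ge_disjoint_image hf.continuousOn
    (fun n ↦ (hφ n).continuousOn) hφΩ hg hK' hK'c.nonempty hK'G hL hLΩ
    (ε := 1 / 4) (by norm_num) (max N N')
  obtain ⟨U, hU, hK'U, hUG, hinjU⟩ := hN' n (le_of_max_le_right hn)
  refine ⟨n, le_of_max_le_left hn, hdisj.mono_left (image_mono hKK'), ?_⟩
  refine omegaConvex_of_forall_exists_lt_norm (r := 1 / 2)
    (hK.image_of_continuousOn ((hφ n).continuousOn.mono hKG)).isClosed
    ((hφΩ n).mono_left hKG).image_subset (hf.sub_const M) ?_ fun z hz ↦ ?_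
  · rintro _ ⟨z, hz, rfl⟩
    have hsplit : f (φ n z) - M = (f (φ n z) - (g z + M)) + g z := by ring
    linarith [hsplit ▸ norm_add_le (f (φ n z) - (g z + M)) (g z), happrox z (hKK' hz), hgK z hz]
  · obtain ⟨t, ht, htz⟩ := exists_map_mem_connectedComponentIn_compl_image hU ((hφ n).mono hUG)
      hinjU hK'c.isPreconnected hK'U hK hne hKK' hTK' hmeets hz
    refine ⟨φ n t, htz, ?_⟩
    have hone : (1 : ℂ) = (f (φ n t) - M) - ((f (φ n t) - (g t + M)) + (g t - 1)) := by ring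
    have htriangle : ‖(1 : ℂ)‖ ≤ ‖f (φ n t) - M‖ + (‖f (φ n t) - (g t + M)‖ + ‖g t - 1‖) := by
      nth_rw 1 [hone]
      exact (norm_sub_le _ _).trans (by gcongr; exact norm_add_le _ _)
    linarith [norm_one (α := ℂ), happrox t (hTK' ht), hgT t ht]

end Necessity

section Sufficiency

theorem exists_denseRange_of_transitive {ι X Y : Type*} [TopologicalSpace X]
    [BaireSpace X] [Nonempty X] [TopologicalSpace Y] [SecondCountableTopology Y] {T : ι → X → Y}
    (hT : ∀ i, Continuous (T i)) (htrans : ∀ U V, IsOpen U → U.Nonempty → IsOpen V → V.Nonempty →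
      ∃ i, ∃ x ∈ U, T i x ∈ V) : ∃ x, DenseRange fun i ↦ T i x := by
  let basis := TopologicalSpace.countableBasis Y
  have hdense : Dense (⋂ V ∈ basis, ⋃ i, T i ⁻¹' V) := by
    refine dense_biInter_of_isOpen (fun V hV ↦ isOpen_iUnion fun i ↦
      (TopologicalSpace.isOpen_of_mem_countableBasis hV).preimage (hT i))
      (TopologicalSpace.countable_countableBasis Y) fun V hV ↦ dense_iff_inter_open.2 ?_
    intro U hU hUne
    obtain ⟨i, x, hxU, hxV⟩ := htrans U V hU hUne (TopologicalSpace.isOpen_of_mem_countableBasis hV)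
      (TopologicalSpace.nonempty_of_mem_countableBasis hV)
    exact ⟨x, hxU, mem_iUnion.2 ⟨i, hxV⟩⟩
  obtain ⟨x, hx⟩ := hdense.nonempty
  refine ⟨x, (TopologicalSpace.isBasis_countableBasis Y).dense_iff.2 fun V hV _ ↦ ?_⟩
  obtain ⟨i, hi⟩ := mem_iUnion.1 (mem_iInter₂.1 hx V hV)
  exact ⟨T i x, hi, mem_range_self i⟩

variable {G Ω : Set ℂ}

theorem hasBasis_nhds_holomorphicRestrict {K : Set ℂ} (F : holomorphicRestrict Ω K) :
    (nhds F).HasBasis (fun p : Set K × ℝ ↦ IsCompact p.1 ∧ 0 < p.2)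
      fun p ↦ {H | ∀ z ∈ p.1, dist (F.1 z) (H.1 z) < p.2} := by
  rw [nhds_induced]
  exact (nhds_basis_uniformity'
    Metric.uniformity_basis_dist.compactConvergenceUniformity).comap Subtype.val

theorem mem_holomorphicRestrict_self_iff {F : C(Ω, ℂ)} : F ∈ holomorphicRestrict Ω Ω ↔
    DifferentiableOn ℂ (Function.extend Subtype.val F 0) Ω := by
  refine ⟨?_, fun h ↦ ⟨_, h, fun z ↦ (Subtype.val_injective.extend_apply F 0 z).symm⟩⟩
  rintro ⟨f, hf, hFf⟩
  refine hf.congr fun z hz ↦ ?_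
  rw [← hFf ⟨z, hz⟩]
  exact Subtype.val_injective.extend_apply F 0 ⟨z, hz⟩

theorem isClosed_holomorphicRestrict_self (hΩ : IsOpen Ω) :
    IsClosed (holomorphicRestrict Ω Ω : Set C(Ω, ℂ)) := by
  have := hΩ.locallyCompactSpace
  refine isClosed_of_closure_subset fun F hF ↦ ?_
  have := mem_closure_iff_nhdsWithin_neBot.1 hF
  have hlim : TendstoLocallyUniformly (fun H z ↦ H z) F
      (nhdsWithin F (holomorphicRestrict Ω Ω : Set C(Ω, ℂ))) :=
    ContinuousMap.tendsto_iff_tendstoLocallyUniformly.1 (tendsto_id.mono_left nhdsWithin_le_nhds)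
  have hlimOn : TendstoLocallyUniformlyOn (fun H : C(Ω, ℂ) ↦ Function.extend Subtype.val H 0)
      (Function.extend Subtype.val F 0)
      (nhdsWithin F (holomorphicRestrict Ω Ω : Set C(Ω, ℂ))) Ω := by
    rw [tendstoLocallyUniformlyOn_iff_tendstoLocallyUniformly_comp_coe]
    simpa only [Function.comp_def, Subtype.val_injective.extend_apply] using hlim
  exact mem_holomorphicRestrict_self_iff.2 <| hlimOn.differentiableOn
    (eventually_mem_nhdsWithin.mono fun H hH ↦ mem_holomorphicRestrict_self_iff.1 hH) hΩ

theorem baireSpace_holomorphicRestrict_self (hΩ : IsOpen Ω) :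
    BaireSpace (holomorphicRestrict Ω Ω) := by
  have := hΩ.locallyCompactSpace
  have : CompleteSpace (holomorphicRestrict Ω Ω) :=
    (isClosed_holomorphicRestrict_self hΩ).completeSpace_coe
  have : IsCountablyGenerated (uniformity (holomorphicRestrict Ω Ω)) := by
    rw [uniformity_subtype]
    infer_instance
  infer_instance

/-- The composition operator `f ↦ f ∘ φ` from `H(Ω)` to `H(G)`. -/
noncomputable def holomorphicPrecomp {φ : ℂ → ℂ} (hφ : DifferentiableOn ℂ φ G) (hφΩ : MapsTo φ G Ω)
    (F : holomorphicRestrict Ω Ω) : holomorphicRestrict G G :=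
  ⟨F.1.comp ⟨hφΩ.restrict φ G Ω, hφ.continuousOn.mapsToRestrict hφΩ⟩, by
    obtain ⟨f, hf, hFf⟩ := F.2
    exact ⟨f ∘ φ, hf.comp hφ hφΩ, fun z ↦ hFf ⟨φ z, hφΩ z.2⟩⟩⟩

theorem continuous_holomorphicPrecomp {φ : ℂ → ℂ} (hφ : DifferentiableOn ℂ φ G)
    (hφΩ : MapsTo φ G Ω) : Continuous (holomorphicPrecomp hφ hφΩ) :=
  ((ContinuousMap.continuous_precomp _).comp continuous_subtype_val).subtype_mk _

/-- Topological transitivity of the sequence of composition operators `f ↦ f ∘ φ n` from `H(Ω)` to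
`H(G)`, spelled out for basic neighbourhoods of `f` and `g`. -/
def CompositionTransitive (G Ω : Set ℂ) (φ : ℕ → ℂ → ℂ) : Prop :=
  ∀ K ⊆ G, IsCompact K → ∀ L ⊆ Ω, IsCompact L → ∀ f g : ℂ → ℂ,
    DifferentiableOn ℂ f Ω → DifferentiableOn ℂ g G → ∀ ε > 0, ∃ n, ∃ F : ℂ → ℂ,
      DifferentiableOn ℂ F Ω ∧ (∀ z ∈ L, ‖F z - f z‖ < ε) ∧ ∀ z ∈ K, ‖F (φ n z) - g z‖ < ε

theorem CompositionTransitive.exists_universalFor {φ : ℕ → ℂ → ℂ}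
    (htrans : CompositionTransitive G Ω φ) (hG : IsOpen G) (hΩ : IsOpen Ω)
    (hφ : ∀ n, DifferentiableOn ℂ (φ n) G) (hφΩ : ∀ n, MapsTo (φ n) G Ω) :
    ∃ f, DifferentiableOn ℂ f Ω ∧ UniversalFor G φ f := by
  have := hG.locallyCompactSpace
  have := baireSpace_holomorphicRestrict_self hΩ
  have : SecondCountableTopology (holomorphicRestrict G G) :=
    TopologicalSpace.Subtype.secondCountableTopology _
  obtain ⟨⟨F, f, hf, hFf⟩, hdense⟩ := exists_denseRange_of_transitive
    (fun n ↦ continuous_holomorphicPrecomp (hφ n) (hφΩ n)) fun U V hU ⟨F, hFU⟩ hV ⟨H, hHV⟩ ↦ by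
      obtain ⟨⟨L, ε⟩, ⟨hL, hε⟩, hLU⟩ :=
        (hasBasis_nhds_holomorphicRestrict F).mem_iff.1 (hU.mem_nhds hFU)
      obtain ⟨⟨K, δ⟩, ⟨hK, hδ⟩, hKV⟩ :=
        (hasBasis_nhds_holomorphicRestrict H).mem_iff.1 (hV.mem_nhds hHV)
      obtain ⟨f, hf, hFf⟩ := F.2
      obtain ⟨g, hg, hHg⟩ := H.2
      obtain ⟨n, u, hu, huf, hug⟩ := htrans _ (Subtype.coe_image_subset G K)
        (hK.image continuous_subtype_val) _ (Subtype.coe_image_subset Ω L)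
        (hL.image continuous_subtype_val) f g hf hg (min ε δ) (lt_min hε hδ)
      refine ⟨n, ⟨⟨Ω.domRestrict u, hu.continuousOn.domRestrict⟩, u, hu, fun _ ↦ rfl⟩,
        hLU fun z hz ↦ ?_, hKV fun z hz ↦ ?_⟩
      · rw [hFf, dist_comm, dist_eq_norm]
        exact (huf z (mem_image_of_mem _ hz)).trans_le (min_le_left ε δ)
      · rw [hHg, dist_comm, dist_eq_norm]
        exact (hug z (mem_image_of_mem _ hz)).trans_le (min_le_right ε δ)
  refine ⟨f, hf, fun g hg K hKG hK ε hε ↦ ?_⟩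
  let H : holomorphicRestrict G G :=
    ⟨⟨G.domRestrict g, hg.continuousOn.domRestrict⟩, g, hg, fun _ ↦ rfl⟩
  have hKG' : IsCompact (Subtype.val ⁻¹' K : Set G) := by
    rwa [Subtype.isCompact_iff, Subtype.image_preimage_coe, inter_eq_right.2 hKG]
  obtain ⟨n, hn⟩ := hdense.mem_nhds
    ((hasBasis_nhds_holomorphicRestrict H).mem_of_mem (i := (Subtype.val ⁻¹' K, ε)) ⟨hKG', hε⟩)
  refine ⟨n, fun z hz ↦ ?_⟩
  have hdist := hn ⟨z, hKG hz⟩ hz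
  rw [dist_comm, dist_eq_norm] at hdist
  rw [← hFf ⟨φ n z, hφΩ n (hKG hz)⟩]
  exact hdist

theorem compositionTransitive_of_image_omegaConvex (hG : IsOpen G) (hGc : IsConnected G)
    (hΩ : IsOpen Ω) (hΩc : IsConnected Ω)
    (hGtop : HasNoHole G ∨ ∃ C₁ C₂ : Set ℂ, IsHole G C₁ ∧ IsHole G C₂ ∧ C₁ ≠ C₂)
    {φ : ℕ → ℂ → ℂ} (hφ : ∀ n, DifferentiableOn ℂ (φ n) G) (hφΩ : ∀ n, MapsTo (φ n) G Ω)
    (hinj : EventuallyInjective G φ)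
    (hescape : ∀ K ⊆ G, IsCompact K → OmegaConvex G K → ∀ L ⊆ Ω, IsCompact L →
      ∀ N, ∃ n ≥ N, φ n '' K ∩ L = ∅ ∧ OmegaConvex Ω (φ n '' K)) :
    CompositionTransitive G Ω φ := by
  intro K hKG hK L hLΩ hL f g hf hg ε hε
  obtain ⟨n, K', L', U, hK', hL', hKK', hLL', hKU, hUG, hL'Ω, hU, hinjU, hdisj, hconv⟩ :=
    exists_injOn_omegaConvex_union hG hGc hΩ hΩc hGtop hφ hφΩ hinj hescape hK hKG hL hLΩ
  have hφU : DifferentiableOn ℂ (φ n) U := (hφ n).mono hUG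
  obtain ⟨e, rfl, he⟩ := exists_openPartialHomeomorph_of_injOn hU hφU hinjU
  rw [← he] at hφU hdisj hconv
  have hmaps : MapsTo e e.source Ω := he ▸ (hφΩ n).mono_left hUG
  have hK'target : e '' K' ⊆ e.target := image_subset_iff.2 fun z hz ↦ e.map_source (hKU hz)
  have hginv : DifferentiableOn ℂ (g ∘ e.symm) e.target :=
    (hg.mono hUG).comp (differentiableOn_symm hφU) e.mapsTo_symm
  obtain ⟨F, hF, hFf, hFg⟩ := exists_differentiableOn_norm_sub_lt_of_disjoint hL'
    (hK'.image_of_continuousOn (e.continuousOn.mono hKU)) hdisj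
    (union_subset hL'Ω (hmaps.mono_left hKU).image_subset) hconv hΩ e.open_target hL'Ω hK'target
    hf hginv hε
  refine ⟨n, F, hF, fun z hz ↦ hFf z (hLL' hz), fun z hz ↦ ?_⟩
  have hFz := hFg (e z) (mem_image_of_mem e (hKK' hz))
  rwa [Function.comp_apply, e.left_inv (hKU (hKK' hz)), he] at hFz

end Sufficiency

/-- Theorem `thm-charac-injective` (2). -/
theorem universal_iff_image_omegaConvex
    (G Ω : Set ℂ) (hG : IsOpen G) (hGconn : IsConnected G)
    (hΩ : IsOpen Ω) (hΩconn : IsConnected Ω)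
    (hGtop : HasNoHole G ∨ ∃ C₁ C₂ : Set ℂ, IsHole G C₁ ∧ IsHole G C₂ ∧ C₁ ≠ C₂)
    (φ : ℕ → ℂ → ℂ) (hφd : ∀ n, DifferentiableOn ℂ (φ n) G)
    (hφm : ∀ n, Set.MapsTo (φ n) G Ω)
    (hinj : EventuallyInjective G φ) :
    (∃ f : ℂ → ℂ, DifferentiableOn ℂ f Ω ∧ UniversalFor G φ f) ↔
      ∀ K : Set ℂ, K ⊆ G → IsCompact K → OmegaConvex G K →
        ∀ L : Set ℂ, L ⊆ Ω → IsCompact L →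
          ∀ N : ℕ, ∃ n ≥ N, (φ n '' K) ∩ L = ∅ ∧ OmegaConvex Ω (φ n '' K) := by
  constructor
  · rintro ⟨f, hf, huniversal⟩ K hKG hK hconv L hLΩ hL N
    obtain ⟨n, hn, hdisj, himage⟩ := huniversal.exists_ge_image_omegaConvex hG hGconn hφd hφm hinj
      hf hK hKG hconv hL hLΩ N
    exact ⟨n, hn, hdisj.inter_eq, himage⟩
  · intro hescape
    have htrans : CompositionTransitive G Ω φ :=
      compositionTransitive_of_image_omegaConvex hG hGconn hΩ hΩconn hGtop hφd hφm hinj hescape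
    exact htrans.exists_universalFor hG hΩ hφd hφm
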